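/- arXiv:2202.01707 — 8 statements merged into one kernel-verified Lean document; each statement's English description precedes it below -/
import Mathlib

section
/- Let û ∈ L^∞([t0,t1],R^m). Then the projection π(t,v) = t is surjective from clm(û) onto [t0,t1]; that is, for every t ∈ [t0,t1] there exists v ∈ R^m with (t,v) ∈ clm(û). -/
open MeasureTheory Set Filter

/-- The closure of a measurable function `u` with respect to Lebesgue measure. -/
def clmSet (t0 t1 : ℝ) {m : ℕ} (u : ℝ → (Fin m → ℝ)) : Set (ℝ × (Fin m → ℝ)) :=
  {p | ∀ O : Set (ℝ × (Fin m → ℝ)), IsOpen O → p ∈ O →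
    0 < volume (Prod.fst '' (O ∩ ((fun t => (t, u t)) '' Icc t0 t1)))}

/-- Every point of a nondegenerate closed interval is a limit of the interval in the essential
sense: each of its neighbourhoods meets the interval in a set of positive measure. -/
theorem neBot_nhdsWithin_Icc_inf_ae {a b t : ℝ} (hab : a < b) (ht : t ∈ Icc a b) :
    (nhdsWithin t (Icc a b) ⊓ ae volume).NeBot := by
  refine inf_neBot_iff.2 fun S hS T hT => ?_
  obtain ⟨U, hU, htU, hUS⟩ := mem_nhdsWithin.1 hS
  have hne : (U ∩ Ioo a b).Nonempty :=
    mem_closure_iff.1 (by rwa [closure_Ioo hab.ne]) U hU htU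
  have hpos : 0 < volume (U ∩ Ioo a b) := (hU.inter isOpen_Ioo).measure_pos volume hne
  by_contra hST
  refine hpos.ne' (measure_mono_null (fun x hx hxT => hST ⟨x, ?_, hxT⟩) (mem_ae_iff.1 hT))
  exact hUS ⟨hx.1, Ioo_subset_Icc_self hx.2⟩

/-- for `û ∈ L^∞([t0,t1], ℝ^m)`, the projection `π (t,v) = t` is surjective
from `clm(û)` onto `[t0, t1]`: for every `t ∈ [t0,t1]` there is `v` with `(t,v) ∈ clm(û)`. -/
theorem clm_proj_surjective {m : ℕ} (t0 t1 : ℝ) (ht : t0 < t1)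
    (uh : ℝ → (Fin m → ℝ))
    (huh_meas : Measurable uh)
    (huh_bdd : ∃ C : ℝ, ∀ᵐ t ∂(volume.restrict (Icc t0 t1)), ‖uh t‖ ≤ C) :
    ∀ t ∈ Icc t0 t1, ∃ v : Fin m → ℝ, (t, v) ∈ clmSet t0 t1 uh := by
  intro t htI
  obtain ⟨C, hC⟩ := huh_bdd
  have hne := neBot_nhdsWithin_Icc_inf_ae ht htI
  have hball : map uh (nhdsWithin t (Icc t0 t1) ⊓ ae volume) ≤
      Filter.principal (Metric.closedBall 0 C) := by
    rw [le_principal_iff, mem_map]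
    have hC' : ∀ᵐ s, s ∈ Icc t0 t1 → ‖uh s‖ ≤ C :=
      (ae_restrict_iff' measurableSet_Icc).1 hC
    filter_upwards [mem_inf_of_left self_mem_nhdsWithin, mem_inf_of_right hC'] with s hs hsC
    exact mem_closedBall_zero_iff.2 (hsC hs)
  obtain ⟨v, -, hv⟩ := (isCompact_closedBall (0 : Fin m → ℝ) C).exists_clusterPt hball
  refine ⟨v, fun O hO htv => pos_iff_ne_zero.2 fun hzero => ?_⟩
  obtain ⟨U, V, hU, hV, htU, hvV, hUV⟩ := isOpen_prod_iff.1 hO t v htv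
  have hfreq := (mapClusterPt_iff_frequently.1 hv) V (hV.mem_nhds hvV)
  refine hfreq ?_
  filter_upwards [mem_inf_of_left self_mem_nhdsWithin,
    mem_inf_of_left (mem_nhdsWithin_of_mem_nhds (hU.mem_nhds htU)),
    mem_inf_of_right (compl_mem_ae_iff.2 hzero)] with s hsI hsU hs hsV
  exact hs ⟨(s, uh s), ⟨hUV ⟨hsU, hsV⟩, s, hsI, rfl⟩, rfl⟩
end

section
/- Let û ∈ L^∞([t0,t1],R^m). Then clm(û) equals the intersection, over all Lebesgue-measurable sets E ⊆ [t0,t1] of full measure (mes E = t1 − t0), of the topological closures of the restricted graphs: clm(û) = ⋂_{E : mes E = t1−t0} cl{(t,û(t)) : t ∈ E}. -/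
open MeasureTheory Set Filter

/-- The projection of the part of a graph lying in `O` is the set of parameters whose graph
point lies in `O`. -/
theorem fst_image_inter_graph {α β : Type*} (u : α → β) (I : Set α) (O : Set (α × β)) :
    Prod.fst '' (O ∩ ((fun t => (t, u t)) '' I)) = {t ∈ I | (t, u t) ∈ O} := by
  ext t
  constructor
  · rintro ⟨_, ⟨hO, s, hs, rfl⟩, rfl⟩
    exact ⟨hs, hO⟩
  · rintro ⟨hI, hO⟩
    exact ⟨(t, u t), ⟨hO, t, hI, rfl⟩, rfl⟩

/-- for `û ∈ L^∞([t0,t1], ℝ^m)`, `clm(û)` equals the intersection, over all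
Lebesgue measurable sets `E ⊆ [t0,t1]` of full measure `t1 - t0`, of the topological
closures of the restricted graphs `{(t, û t) : t ∈ E}`. -/
theorem clm_eq_iInter_closure_graph {m : ℕ} (t0 t1 : ℝ) (ht : t0 < t1)
    (uh : ℝ → (Fin m → ℝ))
    (huh_meas : Measurable uh)
    (huh_bdd : ∃ C : ℝ, ∀ᵐ t ∂(volume.restrict (Icc t0 t1)), ‖uh t‖ ≤ C) :
    clmSet t0 t1 uh =
      ⋂ E ∈ {E : Set ℝ | MeasurableSet E ∧ E ⊆ Icc t0 t1 ∧
        volume E = ENNReal.ofReal (t1 - t0)},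
        closure ((fun t => (t, uh t)) '' E) := by
  ext p
  simp only [clmSet, fst_image_inter_graph, mem_ofPred_eq, mem_iInter]
  constructor
  · rintro hp E ⟨hE, hEI, hvol⟩
    rw [mem_closure_iff]
    intro O hO hpO
    have hnull : volume (Icc t0 t1 \ E) = 0 := by
      rw [measure_sdiff hEI hE.nullMeasurableSet (by simp [hvol]), hvol, Real.volume_Icc, tsub_self]
    obtain ⟨t, ⟨htI, htO⟩, htE⟩ : ({t ∈ Icc t0 t1 | (t, uh t) ∈ O} ∩ E).Nonempty := by
      by_contra hempty
      have hsub : {t ∈ Icc t0 t1 | (t, uh t) ∈ O} ⊆ Icc t0 t1 \ E :=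
        fun t ht => ⟨ht.1, fun htE => hempty ⟨t, ht, htE⟩⟩
      exact (hp O hO hpO).ne' (measure_mono_null hsub hnull)
    exact ⟨(t, uh t), htO, t, htE, rfl⟩
  · intro hp O hO hpO
    rw [pos_iff_ne_zero]
    intro hnull
    have hmeas : MeasurableSet {t ∈ Icc t0 t1 | (t, uh t) ∈ O} :=
      measurableSet_Icc.inter ((measurable_id.prodMk huh_meas) hO.measurableSet)
    have hmem := hp (Icc t0 t1 \ {t ∈ Icc t0 t1 | (t, uh t) ∈ O})
      ⟨measurableSet_Icc.diff hmeas, sdiff_subset, by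
        rw [measure_sdiff_null hnull, Real.volume_Icc]⟩
    obtain ⟨_, hqO, t, htE, rfl⟩ := mem_closure_iff.1 hmem O hO hpO
    exact htE.2 ⟨htE.1, hqO⟩
end

section
/- If ŵ = (x̂,û) is a weak local minimum of Problem P, then for every δ > 0 the three cones Ω0, Ω_δ, Ω ⊆ X = R^n × L^∞([t0,t1],R^m) × R are disjoint: Ω0 ∩ Ω_δ ∩ Ω = ∅. -/
open MeasureTheory Set Filter

/-- `u` is essentially bounded on `[t0,t1]`. -/
def EssBdd (t0 t1 : ℝ) {k : ℕ} (u : ℝ → (Fin k → ℝ)) : Prop :=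
  ∃ C : ℝ, ∀ᵐ t ∂(volume.restrict (Icc t0 t1)), ‖u t‖ ≤ C

/-- Admissible process of Problem P. -/
def Admissible (t0 t1 : ℝ) {n m : ℕ}
    (f : (Fin n → ℝ) → (Fin m → ℝ) → (Fin n → ℝ))
    (G : (Fin n → ℝ) → (Fin m → ℝ) → ℝ)
    (x : ℝ → (Fin n → ℝ)) (u : ℝ → (Fin m → ℝ)) : Prop :=
  Measurable u ∧ EssBdd t0 t1 u ∧
  IntegrableOn (fun s => f (x s) (u s)) (Icc t0 t1) ∧
  (∀ t ∈ Icc t0 t1, x t = x t0 + ∫ s in Icc t0 t, f (x s) (u s)) ∧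
  (∀ᵐ t ∂(volume.restrict (Icc t0 t1)), G (x t) (u t) ≤ 0)

/-- `(x̂,û)` is a weak local minimum of Problem P. -/
def WeakLocalMin (t0 t1 : ℝ) {n m : ℕ}
    (J : (Fin n → ℝ) → (Fin n → ℝ) → ℝ)
    (f : (Fin n → ℝ) → (Fin m → ℝ) → (Fin n → ℝ))
    (G : (Fin n → ℝ) → (Fin m → ℝ) → ℝ)
    (xh : ℝ → (Fin n → ℝ)) (uh : ℝ → (Fin m → ℝ)) : Prop :=
  Admissible t0 t1 f G xh uh ∧
  ∃ ε > (0:ℝ), ∀ x u, Admissible t0 t1 f G x u →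
    (∀ t ∈ Icc t0 t1, ‖x t - xh t‖ ≤ ε) →
    (∀ᵐ t ∂(volume.restrict (Icc t0 t1)), ‖u t - uh t‖ ≤ ε) →
    J (xh t0) (xh t1) ≤ J (x t0) (x t1)

/-- Integral form of Grönwall's inequality on `[a,b]`. -/
theorem le_mul_exp_of_le_add_integral {φ : ℝ → ℝ} {a b c K : ℝ} (hK : 0 ≤ K)
    (hφ : ContinuousOn φ (Icc a b))
    (h : ∀ t ∈ Icc a b, φ t ≤ c + K * ∫ s in Icc a t, φ s) :
    ∀ t ∈ Icc a b, φ t ≤ c * Real.exp (K * (t - a)) := by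
  intro t ht
  have hab : a ≤ b := ht.1.trans ht.2
  set ψ : ℝ → ℝ := IccExtend hab ((Icc a b).domRestrict φ) with hψ
  have hψc : Continuous ψ := (continuousOn_iff_continuous_domRestrict.1 hφ).Icc_extend'
  have hψφ : ∀ s ∈ Icc a b, ψ s = φ s := fun s hs => by
    rw [hψ, IccExtend_of_mem hab _ hs]; rfl
  have hint : ∀ r ∈ Icc a b, ∫ s in Icc a r, φ s = ∫ s in a..r, ψ s := by
    intro r hr
    rw [intervalIntegral.integral_of_le hr.1, ← integral_Icc_eq_integral_Ioc]
    exact setIntegral_congr_fun measurableSet_Icc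
      fun s hs => (hψφ s ⟨hs.1, hs.2.trans hr.2⟩).symm
  have hd : ∀ r, HasDerivAt (fun r => c + K * ∫ s in a..r, ψ s) (K * ψ r) r := fun r =>
    ((intervalIntegral.integral_hasDerivAt_right (hψc.intervalIntegrable _ _)
      (hψc.stronglyMeasurableAtFilter _ _) hψc.continuousAt).const_mul K).const_add c
  have key := le_gronwallBound_of_liminf_deriv_right_le (δ := c) (K := K) (ε := 0)
    (f := fun r => c + K * ∫ s in a..r, ψ s) (f' := fun r => K * ψ r) (a := a) (b := b)
    (fun r _ => (hd r).continuousAt.continuousWithinAt)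
    (fun r _ q hq => (hd r).hasDerivWithinAt.liminf_right_slope_le hq)
    (by simp)
    (fun r hr => by
      have hr' := Ico_subset_Icc_self hr
      have := h r hr'
      rw [hint r hr', ← hψφ r hr'] at this
      simpa using mul_le_mul_of_nonneg_left this hK) t ht
  rw [gronwallBound_ε0] at key
  refine (h t ht).trans ?_
  rw [hint t ht]
  exact key

section Caratheodory

variable {E : Type*} [NormedAddCommGroup E] [NormedSpace ℝ E]

theorem norm_setIntegral_sub_le_of_lipschitz {g : ℝ → E → E} {K : NNReal} {a b : ℝ}
    (hg : ∀ s, LipschitzWith K (g s)) {x y : ℝ → E}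
    (hx : ContinuousOn x (Icc a b)) (hy : ContinuousOn y (Icc a b))
    (hgx : IntegrableOn (fun s => g s (x s)) (Icc a b))
    (hgy : IntegrableOn (fun s => g s (y s)) (Icc a b)) {t : ℝ} (ht : t ∈ Icc a b) :
    ‖(∫ s in Icc a t, g s (x s)) - ∫ s in Icc a t, g s (y s)‖
      ≤ K * ∫ s in Icc a t, ‖x s - y s‖ := by
  have hsub : Icc a t ⊆ Icc a b := Icc_subset_Icc_right ht.2
  rw [← integral_sub (hgx.mono_set hsub) (hgy.mono_set hsub), ← integral_const_mul]
  refine norm_integral_le_of_norm_le ?_ (Eventually.of_forall fun s => ?_)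
  · exact (((hx.sub hy).norm.mono hsub).integrableOn_Icc).const_mul _
  · simpa [dist_eq_norm] using (hg s).dist_le_mul (x s) (y s)

/-- Stability of solutions of a Carathéodory integral equation with Lipschitz right-hand side. -/
theorem norm_sub_le_of_integral_eq {g : ℝ → E → E} {K : NNReal} {a b : ℝ}
    (hg : ∀ s, LipschitzWith K (g s)) {x y : ℝ → E} {x0 : E} {θ : ℝ}
    (hx : ContinuousOn x (Icc a b)) (hy : ContinuousOn y (Icc a b))
    (hgx : IntegrableOn (fun s => g s (x s)) (Icc a b))
    (hgy : IntegrableOn (fun s => g s (y s)) (Icc a b))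
    (hxe : ∀ t ∈ Icc a b, x t = x0 + ∫ s in Icc a t, g s (x s))
    (hye : ∀ t ∈ Icc a b, ‖y t - (x0 + ∫ s in Icc a t, g s (y s))‖ ≤ θ) :
    ∀ t ∈ Icc a b, ‖x t - y t‖ ≤ θ * Real.exp (K * (t - a)) := by
  refine le_mul_exp_of_le_add_integral K.coe_nonneg (hx.sub hy).norm fun t ht => ?_
  have h1 := norm_setIntegral_sub_le_of_lipschitz hg hx hy hgx hgy ht
  have h2 := hye t ht
  have h3 : x t - y t = ((∫ s in Icc a t, g s (x s)) - ∫ s in Icc a t, g s (y s))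
      - (y t - (x0 + ∫ s in Icc a t, g s (y s))) := by
    rw [hxe t ht]; abel
  rw [h3]
  refine (norm_sub_le _ _).trans ?_
  rw [add_comm]
  exact add_le_add h2 h1

/-- Carathéodory existence theorem for a bounded, uniformly Lipschitz right-hand side. -/
theorem exists_integral_eq_of_lipschitz [CompleteSpace E] {g : ℝ → E → E} {K : NNReal}
    {a b B : ℝ} (hab : a ≤ b) (hg : ∀ s, LipschitzWith K (g s)) (hB : ∀ s z, ‖g s z‖ ≤ B)
    (hmeas : ∀ y : ℝ → E, ContinuousOn y (Icc a b) →
      AEStronglyMeasurable (fun s => g s (y s)) (volume.restrict (Icc a b))) (x0 : E) :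
    ∃ x : ℝ → E, ContinuousOn x (Icc a b) ∧
      ∀ t ∈ Icc a b, x t = x0 + ∫ s in Icc a t, g s (x s) := by
  set L : ℝ := 2 * K + 1 with hL
  have hK := K.coe_nonneg
  have hLpos : 0 < L := by positivity
  let Y : C(Icc a b, E) → ℝ → E := fun y s => Real.exp (L * (s - a)) • IccExtend hab y s
  have hY : ∀ y, Continuous (Y y) := fun y => by
    have : Continuous (IccExtend hab y) := y.continuous.Icc_extend'
    fun_prop
  have hgi : ∀ y, IntegrableOn (fun s => g s (Y y s)) (Icc a b) := fun y =>
    Integrable.of_bound (hmeas _ (hY y).continuousOn) B (Eventually.of_forall fun s => hB _ _)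
  let S : C(Icc a b, E) → ℝ → E := fun y t =>
    Real.exp (-(L * (t - a))) • (x0 + ∫ s in Icc a t, g s (Y y s))
  have hS : ∀ y, ContinuousOn (S y) (Icc a b) := fun y => by
    have := intervalIntegral.continuousOn_primitive_Icc (hgi y)
    fun_prop
  let T : C(Icc a b, E) → C(Icc a b, E) := fun y =>
    ⟨(Icc a b).domRestrict (S y), continuousOn_iff_continuous_domRestrict.1 (hS y)⟩
  have hT : ContractingWith (1 / 2) T := by
    refine ⟨by norm_num, LipschitzWith.of_dist_le_mul fun y z => ?_⟩
    rw [ContinuousMap.dist_le (by positivity)]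
    rintro ⟨t, ht⟩
    have h1 := norm_setIntegral_sub_le_of_lipschitz hg (hY y).continuousOn (hY z).continuousOn
      (hgi y) (hgi z) ht
    have h2 : ∫ s in Icc a t, ‖Y y s - Y z s‖ ≤ Real.exp (L * (t - a)) / L * dist y z := by
      have h3 : ∫ s in Icc a t, ‖Y y s - Y z s‖
          ≤ ∫ s in Icc a t, Real.exp (L * (s - a)) * dist y z := by
        refine setIntegral_mono_on ?_ ?_ measurableSet_Icc fun s _ => ?_
        · exact ((hY y).sub (hY z)).norm.continuousOn.integrableOn_Icc
        · exact Continuous.integrableOn_Icc (by fun_prop)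
        · rw [← smul_sub, norm_smul, Real.norm_of_nonneg (Real.exp_nonneg _)]
          gcongr
          rw [← dist_eq_norm]
          exact ContinuousMap.dist_apply_le_dist _
      refine h3.trans ?_
      rw [integral_mul_const, integral_Icc_eq_integral_Ioc,
        ← intervalIntegral.integral_of_le ht.1]
      gcongr
      have hd : ∀ s ∈ uIcc a t, HasDerivAt (fun s => Real.exp (L * (s - a)) / L)
          (Real.exp (L * (s - a))) s := fun s _ => by
        have := ((((hasDerivAt_id s).sub_const a).const_mul L).exp).div_const L
        refine this.congr_deriv ?_
        rw [mul_one, mul_div_assoc, div_self hLpos.ne', mul_one, id]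
      rw [intervalIntegral.integral_eq_sub_of_hasDerivAt hd
        (Continuous.intervalIntegrable (by fun_prop) _ _)]
      have : 0 ≤ Real.exp (L * (a - a)) / L := by positivity
      linarith
    change dist (S y t) (S z t) ≤ _
    rw [dist_eq_norm, ← smul_sub, norm_smul, Real.norm_of_nonneg (Real.exp_nonneg _),
      add_sub_add_left_eq_sub]
    calc Real.exp (-(L * (t - a))) * _
        ≤ Real.exp (-(L * (t - a))) * (K * (Real.exp (L * (t - a)) / L * dist y z)) := by
          gcongr; exact h1.trans (by gcongr)
      _ = K / L * dist y z := by
          rw [Real.exp_neg]; field_simp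
      _ ≤ _ := by
          gcongr
          push_cast
          rw [div_le_div_iff₀ hLpos (by norm_num)]
          linarith
  set y := ContractingWith.fixedPoint T hT
  have hy : T y = y := hT.fixedPoint_isFixedPt
  refine ⟨Y y, (hY y).continuousOn, fun t ht => ?_⟩
  have h4 : IccExtend hab y t = S y t := by
    rw [IccExtend_of_mem hab _ ht]
    conv_lhs => rw [← hy]
    rfl
  change Real.exp (L * (t - a)) • IccExtend hab y t = _
  rw [h4, smul_smul, ← Real.exp_add]
  simp


/-- A function satisfying a Carathéodory integral equation (with the convention that the integral of
a non-integrable function vanishes) is continuous, and the integrand is integrable. -/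
theorem continuousOn_and_integrableOn_of_integral_eq {g : ℝ → E → E} {K : NNReal}
    {a b B : ℝ} (hab : a ≤ b) (hg : ∀ s, LipschitzWith K (g s)) (hB : ∀ s, ‖g s 0‖ ≤ B)
    (hmeas : ∀ y : ℝ → E, AEStronglyMeasurable y (volume.restrict (Icc a b)) →
      AEStronglyMeasurable (fun s => g s (y s)) (volume.restrict (Icc a b)))
    {x : ℝ → E} {x0 : E} (hx : ∀ t ∈ Icc a b, x t = x0 + ∫ s in Icc a t, g s (x s)) :
    ContinuousOn x (Icc a b) ∧ IntegrableOn (fun s => g s (x s)) (Icc a b) := by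
  have hcont : ∀ t ∈ Icc a b, IntegrableOn (fun s => g s (x s)) (Icc a t) →
      ContinuousOn x (Icc a t) := fun t ht hi =>
    (continuousOn_const.add (intervalIntegral.continuousOn_primitive_Icc hi)).congr
      fun s hs => hx s ⟨hs.1, hs.2.trans ht.2⟩
  suffices hi : IntegrableOn (fun s => g s (x s)) (Icc a b) from
    ⟨hcont b (right_mem_Icc.2 hab) hi, hi⟩
  have hB0 : 0 ≤ B := (norm_nonneg _).trans (hB a)
  have hg0 : IntegrableOn (fun s => g s 0) (Icc a b) :=
    Integrable.of_bound (hmeas (fun _ => 0) aestronglyMeasurable_const) B (Eventually.of_forall hB)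
  set S : Set ℝ := {t ∈ Icc a b | IntegrableOn (fun s => g s (x s)) (Icc a t)} with hS
  set C : ℝ := (‖x0‖ + B * (b - a)) * Real.exp (K * (b - a)) with hC
  have hbound : ∀ t ∈ S, ‖x t‖ ≤ C := by
    rintro t ⟨ht, hi⟩
    have hsub : Icc a t ⊆ Icc a b := Icc_subset_Icc_right ht.2
    have h := norm_sub_le_of_integral_eq (y := fun _ => 0) (θ := ‖x0‖ + B * (b - a)) hg
      (hcont t ht hi) continuousOn_const hi (hg0.mono_set hsub) (fun s hs => hx s (hsub hs))
      (fun s hs => by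
        rw [zero_sub, norm_neg]
        refine (norm_add_le _ _).trans ?_
        gcongr
        refine (norm_setIntegral_le_of_norm_le_const (by simp) fun r _ => hB r).trans ?_
        have hs' := hsub hs
        rw [measureReal_def, Real.volume_Icc, ENNReal.toReal_ofReal (sub_nonneg.2 hs'.1)]
        gcongr
        exact hs'.2) t (right_mem_Icc.2 ht.1)
    rw [sub_zero] at h
    refine h.trans ?_
    have : 0 ≤ b - a := sub_nonneg.2 hab
    rw [hC]
    gcongr
    exact ht.2
  have hord : S.OrdConnected := ⟨fun r hr s hs t ht =>
    ⟨⟨hr.1.1.trans ht.1, ht.2.trans hs.1.2⟩, hs.2.mono_set (Icc_subset_Icc_right ht.2)⟩⟩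
  have hSm : MeasurableSet S := hord.measurableSet
  have hSc : ContinuousOn x S := by
    intro t ht
    by_cases h : ∃ r ∈ S, t < r
    · obtain ⟨r, hr, htr⟩ := h
      refine ((hcont r hr.1 hr.2) t ⟨ht.1.1, htr.le⟩).mono_of_mem_nhdsWithin ?_
      filter_upwards [self_mem_nhdsWithin, mem_nhdsWithin_of_mem_nhds (Iio_mem_nhds htr)]
        with s hs hsr
      exact ⟨hs.1.1, le_of_lt hsr⟩
    · push Not at h
      exact (hcont t ht.1 ht.2 t (right_mem_Icc.2 ht.1.1)).mono fun s hs => ⟨hs.1.1, h s hs⟩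
  have hSx : ∀ t ∈ Icc a b \ S, x t = x0 := by
    rintro t ⟨ht, htS⟩
    have hni : ¬ IntegrableOn (fun s => g s (x s)) (Icc a t) := fun h => htS ⟨ht, h⟩
    rw [hx t ht, integral_undef hni, add_zero]
  have hxm : AEStronglyMeasurable x (volume.restrict (Icc a b)) := by
    have hdm : MeasurableSet (Icc a b \ S) := measurableSet_Icc.diff hSm
    rw [← union_sdiff_cancel (show S ⊆ Icc a b from fun t ht => ht.1),
      aestronglyMeasurable_union_iff]
    exact ⟨hSc.aestronglyMeasurable hSm,
      (continuousOn_const.congr hSx).aestronglyMeasurable hdm⟩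
  refine Integrable.of_bound (hmeas x hxm) (K * max C ‖x0‖ + B) ?_
  filter_upwards [ae_restrict_mem measurableSet_Icc] with t ht
  have hxt : ‖x t‖ ≤ max C ‖x0‖ := by
    by_cases h : t ∈ S
    · exact (hbound t h).trans (le_max_left _ _)
    · rw [hSx t ⟨ht, h⟩]; exact le_max_right _ _
  have h1 := (hg t).dist_le_mul (x t) 0
  rw [dist_eq_norm, dist_zero_right] at h1
  calc ‖g t (x t)‖ = ‖(g t (x t) - g t 0) + g t 0‖ := by rw [sub_add_cancel]
    _ ≤ K * ‖x t‖ + B := (norm_add_le _ _).trans (add_le_add h1 (hB t))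
    _ ≤ _ := by gcongr

end Caratheodory

/-- First-order expansion of a `C¹` map, uniform over bounded sets of base points and directions. -/
theorem exists_uniform_first_order_expansion {V W : Type*} [NormedAddCommGroup V]
    [NormedSpace ℝ V] [ProperSpace V] [NormedAddCommGroup W] [NormedSpace ℝ W] {Φ : V → W}
    (hΦ : ContDiff ℝ 1 Φ) (R B : ℝ) {c : ℝ} (hc : 0 < c) :
    ∃ ρ > 0, ∀ ε, 0 < ε → ε ≤ ρ → ∀ w d w' : V, ‖w‖ ≤ R → ‖d‖ ≤ B →
      ‖w' - w - ε • d‖ ≤ ρ * ε → ‖Φ w' - Φ w - ε • fderiv ℝ Φ w d‖ ≤ c * ε := by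
  wlog hB : 0 ≤ B generalizing B
  · obtain ⟨ρ, hρ, h⟩ := this 0 le_rfl
    exact ⟨ρ, hρ, fun ε h1 h2 w d w' h3 h4 => h ε h1 h2 w d w' h3 (by linarith)⟩
  have hcd : Continuous (fderiv ℝ Φ) := hΦ.continuous_fderiv one_ne_zero
  obtain ⟨C, hC⟩ := (isCompact_closedBall (0 : V) R).exists_bound_of_continuousOn
    hcd.continuousOn
  have huc := (isCompact_closedBall (0 : V) (R + 1)).uniformContinuousOn_of_continuous
    hcd.continuousOn
  rw [Metric.uniformContinuousOn_iff] at huc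
  have hθ : 0 < c / (2 * (B + 1)) := by positivity
  obtain ⟨r₁, hr₁, huc⟩ := huc _ hθ
  set r := min 1 r₁ with hr
  have hrpos : 0 < r := lt_min one_pos hr₁
  refine ⟨min 1 (min (c / (2 * (|C| + 1))) (r / (2 * (B + 1)))), by positivity,
    fun ε hε hερ w d w' hw hd hw' => ?_⟩
  set ρ := min 1 (min (c / (2 * (|C| + 1))) (r / (2 * (B + 1)))) with hρ
  have hρ1 : ρ ≤ 1 := min_le_left _ _
  have hρC : ρ ≤ c / (2 * (|C| + 1)) := (min_le_right _ _).trans (min_le_left _ _)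
  have hρr : ρ ≤ r / (2 * (B + 1)) := (min_le_right _ _).trans (min_le_right _ _)
  have hdist : ‖w' - w‖ ≤ ε * (B + 1) := by
    calc ‖w' - w‖ = ‖(w' - w - ε • d) + ε • d‖ := by rw [sub_add_cancel]
      _ ≤ ρ * ε + ε * B := by
        refine (norm_add_le _ _).trans (add_le_add hw' ?_)
        rw [norm_smul, Real.norm_of_nonneg hε.le]
        gcongr
      _ ≤ 1 * ε + ε * B := by gcongr
      _ = _ := by ring
  have hlt : ‖w' - w‖ < r := by
    have : ε * (B + 1) ≤ r / 2 := by
      calc ε * (B + 1) ≤ r / (2 * (B + 1)) * (B + 1) := by gcongr; exact hερ.trans hρr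
        _ = r / 2 := by field_simp
    linarith
  have hsub : ∀ z ∈ Metric.ball w r, z ∈ Metric.closedBall (0 : V) (R + 1) := by
    intro z hz
    rw [mem_closedBall_zero_iff]
    rw [Metric.mem_ball, dist_eq_norm] at hz
    have h1 : ‖z‖ ≤ ‖z - w‖ + ‖w‖ := by simpa using norm_add_le (z - w) w
    have h2 : r ≤ 1 := min_le_left _ _
    linarith
  have h1 := (convex_ball w r).norm_image_sub_le_of_norm_fderiv_le' (𝕜 := ℝ) (f := Φ)
    (φ := fderiv ℝ Φ w) (C := c / (2 * (B + 1))) (x := w) (y := w')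
    (fun z _ => hΦ.differentiable one_ne_zero z)
    (fun z hz => by
      rw [← dist_eq_norm]
      exact (huc z (hsub z hz) w (hsub w (Metric.mem_ball_self hrpos))
        ((Metric.mem_ball.1 hz).trans_le (min_le_right _ _))).le)
    (Metric.mem_ball_self hrpos) (by rwa [Metric.mem_ball, dist_eq_norm])
  have h2 : ‖fderiv ℝ Φ w (w' - w - ε • d)‖ ≤ |C| * (ρ * ε) :=
    (ContinuousLinearMap.le_opNorm _ _).trans (by
      gcongr
      exact (hC w (by simpa using hw)).trans (le_abs_self C))
  calc ‖Φ w' - Φ w - ε • fderiv ℝ Φ w d‖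
      = ‖(Φ w' - Φ w - fderiv ℝ Φ w (w' - w)) + fderiv ℝ Φ w (w' - w - ε • d)‖ := by
        congr 1; simp only [map_sub, map_smul]; abel
    _ ≤ c / (2 * (B + 1)) * (ε * (B + 1)) + |C| * (ρ * ε) :=
        (norm_add_le _ _).trans (add_le_add (h1.trans (by gcongr)) h2)
    _ ≤ c / (2 * (B + 1)) * (ε * (B + 1)) + (|C| + 1) * (c / (2 * (|C| + 1)) * ε) := by
        gcongr; linarith
    _ = c * ε := by field_simp; ring

/-- The projection of `ℝᵏ` onto the cube `[-M,M]ᵏ`. -/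
def cubeClip (M : ℝ) {k : ℕ} (z : Fin k → ℝ) : Fin k → ℝ := fun i => max (-M) (min M (z i))

theorem norm_cubeClip_le {M : ℝ} (hM : 0 ≤ M) {k : ℕ} (z : Fin k → ℝ) : ‖cubeClip M z‖ ≤ M := by
  rw [pi_norm_le_iff_of_nonneg hM]
  intro i
  rw [Real.norm_eq_abs, abs_le]
  exact ⟨le_max_left _ _, max_le (by linarith) (min_le_left _ _)⟩

theorem cubeClip_of_norm_le {M : ℝ} {k : ℕ} {z : Fin k → ℝ} (hz : ‖z‖ ≤ M) :
    cubeClip M z = z := by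
  ext i
  have h := abs_le.1 ((norm_le_pi_norm z i).trans hz)
  simp [cubeClip, h.1, h.2]

theorem lipschitzWith_cubeClip (M : ℝ) (k : ℕ) :
    LipschitzWith 1 (cubeClip M : (Fin k → ℝ) → (Fin k → ℝ)) := by
  refine LipschitzWith.of_dist_le_mul fun y z => ?_
  rw [NNReal.coe_one, one_mul, dist_pi_le_iff dist_nonneg]
  intro i
  have h := (((LipschitzWith.eval i).const_min M).const_max (-M)).dist_le_mul y z
  simpa [cubeClip] using h

/-- Composition of a `C¹` map with the projection onto a cube is bounded and Lipschitz. -/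
theorem exists_lipschitz_bound_comp_cubeClip {n m : ℕ} {W : Type*} [NormedAddCommGroup W]
    [NormedSpace ℝ W] {F : (Fin n → ℝ) × (Fin m → ℝ) → W} (hF : ContDiff ℝ 1 F) {M : ℝ}
    (hM : 0 ≤ M) :
    ∃ (K : NNReal) (B : ℝ), (∀ v, LipschitzWith K fun z => F (cubeClip M z, cubeClip M v)) ∧
      ∀ z v, ‖F (cubeClip M z, cubeClip M v)‖ ≤ B := by
  have hmem : ∀ (z : Fin n → ℝ) (v : Fin m → ℝ),
      (cubeClip M z, cubeClip M v) ∈ Metric.closedBall (0 : (Fin n → ℝ) × (Fin m → ℝ)) M :=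
    fun z v => by
      rw [mem_closedBall_zero_iff, Prod.norm_def]
      exact max_le (norm_cubeClip_le hM z) (norm_cubeClip_le hM v)
  have hcpt := isCompact_closedBall (0 : (Fin n → ℝ) × (Fin m → ℝ)) M
  obtain ⟨C, hC⟩ := hcpt.exists_bound_of_continuousOn
    (hF.continuous_fderiv one_ne_zero).continuousOn
  obtain ⟨B, hB⟩ := hcpt.exists_bound_of_continuousOn hF.continuous.continuousOn
  refine ⟨C.toNNReal, B, fun v => LipschitzWith.of_dist_le_mul fun y z => ?_,
    fun z v => hB _ (hmem z v)⟩
  have h1 := Convex.norm_image_sub_le_of_norm_fderiv_le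
    (𝕜 := ℝ) (C := C.toNNReal) (fun w _ => hF.differentiable one_ne_zero w)
    (fun w hw => (hC w hw).trans (Real.le_coe_toNNReal C))
    (convex_closedBall _ M) (hmem z v) (hmem y v)
  rw [dist_eq_norm]
  refine h1.trans ?_
  gcongr
  have h2 := (lipschitzWith_cubeClip M n).dist_le_mul y z
  rw [NNReal.coe_one, one_mul, dist_eq_norm] at h2
  simpa [Prod.norm_def] using h2

/-- A trajectory of a `C¹` control system can be varied along any solution of the equation in
variations with error of smaller order, uniformly in time. -/
theorem exists_trajectory_near_variation {n m : ℕ} {a b : ℝ} (hab : a ≤ b)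
    {F : (Fin n → ℝ) × (Fin m → ℝ) → (Fin n → ℝ)} (hF : ContDiff ℝ 1 F)
    {x d : ℝ → (Fin n → ℝ)} {v u : ℝ → (Fin m → ℝ)} {x0 d0 : Fin n → ℝ} {R B : ℝ}
    (hv : Measurable v) (hu : Measurable u)
    (hvR : ∀ᵐ t ∂(volume.restrict (Icc a b)), ‖v t‖ ≤ R)
    (huB : ∀ᵐ t ∂(volume.restrict (Icc a b)), ‖u t‖ ≤ B)
    (hxR : ∀ t ∈ Icc a b, ‖x t‖ ≤ R) (hdB : ∀ t ∈ Icc a b, ‖d t‖ ≤ B)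
    (hxc : ContinuousOn x (Icc a b)) (hdc : ContinuousOn d (Icc a b))
    (hxi : IntegrableOn (fun s => F (x s, v s)) (Icc a b))
    (hdi : IntegrableOn (fun s => fderiv ℝ F (x s, v s) (d s, u s)) (Icc a b))
    (hx : ∀ t ∈ Icc a b, x t = x0 + ∫ s in Icc a t, F (x s, v s))
    (hd : ∀ t ∈ Icc a b, d t = d0 + ∫ s in Icc a t, fderiv ℝ F (x s, v s) (d s, u s))
    {θ : ℝ} (hθ : 0 < θ) :
    ∃ ρ > 0, ∀ ε, 0 < ε → ε ≤ ρ → ∃ y : ℝ → (Fin n → ℝ),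
      IntegrableOn (fun s => F (y s, v s + ε • u s)) (Icc a b) ∧
      (∀ t ∈ Icc a b, y t = x0 + ε • d0 + ∫ s in Icc a t, F (y s, v s + ε • u s)) ∧
      ∀ t ∈ Icc a b, ‖y t - x t - ε • d t‖ ≤ θ * ε := by
  have ha : a ∈ Icc a b := left_mem_Icc.2 hab
  have hR : 0 ≤ R := (norm_nonneg _).trans (hxR a ha)
  have hB : 0 ≤ B := (norm_nonneg _).trans (hdB a ha)
  obtain ⟨K, B', hLip, hbd⟩ := exists_lipschitz_bound_comp_cubeClip hF (M := R + 1) (by positivity)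
  set D : ℝ := (b - a + 1) * Real.exp (K * (b - a)) with hD
  have hba : 0 ≤ b - a := sub_nonneg.2 hab
  have hDpos : 0 < D := by positivity
  have hθ' : 0 < min θ 1 := lt_min hθ one_pos
  obtain ⟨ρ, hρ, hexp⟩ := exists_uniform_first_order_expansion hF R B
    (c := min θ 1 / D) (by positivity)
  refine ⟨min ρ (1 / (B + 1)), by positivity, fun ε hε hερ => ?_⟩
  have hεB : ε * (B + 1) ≤ 1 := by
    have h1 : ε ≤ 1 / (B + 1) := hερ.trans (min_le_right _ _)
    rwa [le_div_iff₀ (by positivity)] at h1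
  have hmeas : ∀ y : ℝ → (Fin n → ℝ), ContinuousOn y (Icc a b) →
      AEStronglyMeasurable (fun s => F (cubeClip (R + 1) (y s), cubeClip (R + 1) (v s + ε • u s)))
        (volume.restrict (Icc a b)) := fun y hy => by
    refine hF.continuous.comp_aestronglyMeasurable (AEStronglyMeasurable.prodMk ?_ ?_)
    · exact (lipschitzWith_cubeClip _ _).continuous.comp_aestronglyMeasurable
        (hy.aestronglyMeasurable measurableSet_Icc)
    · exact (lipschitzWith_cubeClip _ _).continuous.comp_aestronglyMeasurable
        (hv.add (hu.const_smul ε)).aestronglyMeasurable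
  have hint : ∀ y : ℝ → (Fin n → ℝ), ContinuousOn y (Icc a b) →
      IntegrableOn (fun s => F (cubeClip (R + 1) (y s), cubeClip (R + 1) (v s + ε • u s)))
        (Icc a b) := fun y hy =>
    Integrable.of_bound (hmeas y hy) B' (Eventually.of_forall fun s => hbd _ _)
  obtain ⟨y, hyc, hy⟩ := exists_integral_eq_of_lipschitz
    (g := fun s z => F (cubeClip (R + 1) z, cubeClip (R + 1) (v s + ε • u s)))
    hab (fun s => hLip _) (fun s z => hbd _ _) hmeas (x0 + ε • d0)
  have hclip_v : ∀ᵐ s ∂(volume.restrict (Icc a b)),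
      cubeClip (R + 1) (v s + ε • u s) = v s + ε • u s := by
    filter_upwards [hvR, huB] with s hs1 hs2
    refine cubeClip_of_norm_le ((norm_add_le _ _).trans ?_)
    rw [norm_smul, Real.norm_of_nonneg hε.le]
    nlinarith
  have hclip_x : ∀ s ∈ Icc a b, cubeClip (R + 1) (x s + ε • d s) = x s + ε • d s := by
    intro s hs
    refine cubeClip_of_norm_le ((norm_add_le _ _).trans ?_)
    rw [norm_smul, Real.norm_of_nonneg hε.le]
    nlinarith [hxR s hs, hdB s hs]
  have hzc : ContinuousOn (fun s => x s + ε • d s) (Icc a b) := hxc.add (hdc.const_smul ε)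
  have happrox : ∀ t ∈ Icc a b, ‖(x t + ε • d t) - (x0 + ε • d0 + ∫ s in Icc a t,
      F (cubeClip (R + 1) (x s + ε • d s), cubeClip (R + 1) (v s + ε • u s)))‖
        ≤ min θ 1 / D * ε * (b - a) := by
    intro t ht
    have hsub : Icc a t ⊆ Icc a b := Icc_subset_Icc_right ht.2
    have hi1 := hxi.mono_set hsub
    have hi2 : IntegrableOn (fun s => ε • fderiv ℝ F (x s, v s) (d s, u s)) (Icc a t) :=
      (hdi.mono_set hsub).smul ε
    have hi3 := (hint _ hzc).mono_set hsub
    have hi4 : IntegrableOn (fun s => F (cubeClip (R + 1) (x s + ε • d s),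
        cubeClip (R + 1) (v s + ε • u s)) - F (x s, v s)) (Icc a t) := hi3.sub hi1
    have heq : (x t + ε • d t) - (x0 + ε • d0 + ∫ s in Icc a t,
        F (cubeClip (R + 1) (x s + ε • d s), cubeClip (R + 1) (v s + ε • u s)))
        = -∫ s in Icc a t, (F (cubeClip (R + 1) (x s + ε • d s), cubeClip (R + 1) (v s + ε • u s))
          - F (x s, v s) - ε • fderiv ℝ F (x s, v s) (d s, u s)) := by
      rw [integral_sub hi4 hi2, integral_sub hi3 hi1, integral_smul, hx t ht, hd t ht,
        smul_add]
      abel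
    rw [heq, norm_neg]
    have hle : ∀ᵐ s ∂(volume.restrict (Icc a t)),
        ‖F (cubeClip (R + 1) (x s + ε • d s), cubeClip (R + 1) (v s + ε • u s))
          - F (x s, v s) - ε • fderiv ℝ F (x s, v s) (d s, u s)‖ ≤ min θ 1 / D * ε := by
      refine ae_restrict_of_ae_restrict_of_subset hsub ?_
      filter_upwards [ae_restrict_mem measurableSet_Icc, hvR, huB, hclip_v] with s hs h1 h2 h3
      rw [h3, hclip_x s hs]
      refine hexp ε hε (hερ.trans (min_le_left _ _)) _ _ _ ?_ ?_ ?_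
      · exact max_le (hxR s hs) h1
      · exact max_le (hdB s hs) h2
      · simp only [Prod.smul_mk, Prod.mk_sub_mk, add_sub_cancel_left, sub_self, norm_zero]
        positivity
    refine (norm_setIntegral_le_of_norm_le_const_ae' (by simp)
      ((ae_restrict_iff' measurableSet_Icc).1 hle)).trans ?_
    rw [measureReal_def, Real.volume_Icc, ENNReal.toReal_ofReal (sub_nonneg.2 ht.1)]
    gcongr
    exact ht.2
  have hclose : ∀ t ∈ Icc a b, ‖y t - (x t + ε • d t)‖ ≤ min θ 1 * ε := by
    intro t ht
    refine (norm_sub_le_of_integral_eq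
      (g := fun s z => F (cubeClip (R + 1) z, cubeClip (R + 1) (v s + ε • u s)))
      (fun s => hLip _) hyc hzc (hint y hyc) (hint _ hzc) hy happrox t ht).trans ?_
    calc min θ 1 / D * ε * (b - a) * Real.exp (K * (t - a))
        ≤ min θ 1 / D * ε * (b - a + 1) * Real.exp (K * (b - a)) := by
          gcongr
          · linarith
          · exact ht.2
      _ = min θ 1 * ε := by rw [hD]; field_simp
  have hclip_y : ∀ s ∈ Icc a b, cubeClip (R + 1) (y s) = y s := by
    intro s hs
    refine cubeClip_of_norm_le ?_
    have h1 := hclose s hs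
    have h2 : min θ 1 * ε ≤ 1 * ε := by gcongr; exact min_le_right _ _
    have h3 : ‖x s + ε • d s‖ ≤ R + ε * B := by
      refine (norm_add_le _ _).trans (add_le_add (hxR s hs) ?_)
      rw [norm_smul, Real.norm_of_nonneg hε.le]
      gcongr
      exact hdB s hs
    have h4 : ‖y s‖ ≤ ‖y s - (x s + ε • d s)‖ + ‖x s + ε • d s‖ := by
      simpa using norm_add_le (y s - (x s + ε • d s)) (x s + ε • d s)
    linarith
  have hF_eq : (fun s => F (cubeClip (R + 1) (y s), cubeClip (R + 1) (v s + ε • u s)))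
      =ᵐ[volume.restrict (Icc a b)] fun s => F (y s, v s + ε • u s) := by
    filter_upwards [ae_restrict_mem measurableSet_Icc, hclip_v] with s hs h
    rw [h, hclip_y s hs]
  refine ⟨y, (hint y hyc).congr hF_eq, fun t ht => ?_, fun t ht => ?_⟩
  · rw [hy t ht]
    congr 1
    exact integral_congr_ae
      (ae_restrict_of_ae_restrict_of_subset (Icc_subset_Icc_right ht.2) hF_eq)
  · rw [sub_sub]
    refine (hclose t ht).trans ?_
    gcongr
    exact min_le_left _ _

theorem fderiv_prod_apply_eq_add {E₁ E₂ W : Type*} [NormedAddCommGroup E₁] [NormedSpace ℝ E₁]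
    [NormedAddCommGroup E₂] [NormedSpace ℝ E₂] [NormedAddCommGroup W] [NormedSpace ℝ W]
    {φ : E₁ → E₂ → W} {p : E₁} {q : E₂}
    (h : DifferentiableAt ℝ (fun w : E₁ × E₂ => φ w.1 w.2) (p, q)) (d : E₁) (e : E₂) :
    fderiv ℝ (fun w : E₁ × E₂ => φ w.1 w.2) (p, q) (d, e)
      = fderiv ℝ (fun p' => φ p' q) p d + fderiv ℝ (fun q' => φ p q') q e := by
  have h1 := (HasFDerivAt.comp (f := fun p' => (p', q)) p h.hasFDerivAt
    (hasFDerivAt_prodMk_left p q)).fderiv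
  have h2 := (HasFDerivAt.comp (f := fun q' => (p, q')) q h.hasFDerivAt
    (hasFDerivAt_prodMk_right p q)).fderiv
  simp only [Function.comp_def] at h1 h2
  rw [h1, h2]
  simp [← map_add]

/-- Any function satisfying the integral form of the equation in variations along a bounded process
is continuous, and the right-hand side is integrable along it. -/
theorem variation_continuousOn_and_integrableOn {n m : ℕ} {a b : ℝ} (hab : a ≤ b)
    {F : (Fin n → ℝ) × (Fin m → ℝ) → (Fin n → ℝ)} (hF : ContDiff ℝ 1 F)
    {x d : ℝ → (Fin n → ℝ)} {v u : ℝ → (Fin m → ℝ)} {d0 : Fin n → ℝ} {R B : ℝ}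
    (hR : 0 ≤ R) (hB : 0 ≤ B) (hv : Measurable v) (hu : Measurable u)
    (hvR : ∀ᵐ t ∂(volume.restrict (Icc a b)), ‖v t‖ ≤ R)
    (huB : ∀ᵐ t ∂(volume.restrict (Icc a b)), ‖u t‖ ≤ B)
    (hxR : ∀ t ∈ Icc a b, ‖x t‖ ≤ R) (hxc : ContinuousOn x (Icc a b))
    (hd : ∀ t ∈ Icc a b, d t = d0 + ∫ s in Icc a t, fderiv ℝ F (x s, v s) (d s, u s)) :
    ContinuousOn d (Icc a b) ∧
      IntegrableOn (fun s => fderiv ℝ F (x s, v s) (d s, u s)) (Icc a b) := by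
  have hcd : Continuous (fderiv ℝ F) := hF.continuous_fderiv one_ne_zero
  obtain ⟨C, hC⟩ := (isCompact_closedBall (0 : (Fin n → ℝ) × (Fin m → ℝ)) R)
    |>.exists_bound_of_continuousOn hcd.continuousOn
  have hC' : ∀ s, ‖fderiv ℝ F (cubeClip R (x s), cubeClip R (v s))‖ ≤ C.toNNReal := fun s =>
    (hC _ (by
      rw [mem_closedBall_zero_iff]
      exact max_le (norm_cubeClip_le hR _) (norm_cubeClip_le hR _))).trans
      (Real.le_coe_toNNReal C)
  have hae : ∀ y : ℝ → (Fin n → ℝ),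
      (fun s => fderiv ℝ F (cubeClip R (x s), cubeClip R (v s)) (y s, cubeClip B (u s)))
        =ᵐ[volume.restrict (Icc a b)] fun s => fderiv ℝ F (x s, v s) (y s, u s) := fun y => by
    filter_upwards [ae_restrict_mem measurableSet_Icc, hvR, huB] with s hs h1 h2
    rw [cubeClip_of_norm_le (hxR s hs), cubeClip_of_norm_le h1, cubeClip_of_norm_le h2]
  have h := continuousOn_and_integrableOn_of_integral_eq (x := d) (x0 := d0) (K := C.toNNReal)
    (g := fun s z => fderiv ℝ F (cubeClip R (x s), cubeClip R (v s)) (z, cubeClip B (u s)))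
    (B := C.toNNReal * B) hab
    (fun s => LipschitzWith.of_dist_le_mul fun y z => by
      rw [dist_eq_norm, ← map_sub, dist_eq_norm]
      refine (ContinuousLinearMap.le_of_opNorm_le _ (hC' s) _).trans ?_
      simp [Prod.norm_def])
    (fun s => by
      refine (ContinuousLinearMap.le_of_opNorm_le _ (hC' s) _).trans ?_
      gcongr
      exact max_le (by simpa using hB) (norm_cubeClip_le hB _))
    (fun y hy => by
      have hclm : Continuous fun p : ((Fin n → ℝ) × (Fin m → ℝ)) × ((Fin n → ℝ) × (Fin m → ℝ)) =>
          fderiv ℝ F p.1 p.2 := by fun_prop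
      refine hclm.comp_aestronglyMeasurable (f := fun s =>
        ((cubeClip R (x s), cubeClip R (v s)), (y s, cubeClip B (u s)))) ?_
      exact ((((lipschitzWith_cubeClip _ _).continuous.comp_aestronglyMeasurable
          (hxc.aestronglyMeasurable measurableSet_Icc))).prodMk
        ((lipschitzWith_cubeClip _ _).continuous.comp_aestronglyMeasurable
          hv.aestronglyMeasurable)).prodMk
        (hy.prodMk ((lipschitzWith_cubeClip _ _).continuous.comp_aestronglyMeasurable
          hu.aestronglyMeasurable)))
    (fun t ht => by
      rw [hd t ht]
      congr 1
      exact (integral_congr_ae (ae_restrict_of_ae_restrict_of_subset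
        (Icc_subset_Icc_right ht.2) (hae d))).symm)
  exact ⟨h.1, h.2.congr (hae d)⟩

/-- if `ŵ = (x̂,û)` is a weak local minimum of Problem P, then for any
`δ > 0` the three approximating cones `Ω₀`, `Ω_δ`, `Ω` in
`X = ℝⁿ × L^∞([t0,t1],ℝ^m) × ℝ` are disjoint: `Ω₀ ∩ Ω_δ ∩ Ω = ∅`.
Here `A` is the operator sending `(x̄0, ū)` to the solution `x̄` of the equation in
variations (given as a hypothesis in integral form), `M_δ = {t : G(ŵ(t)) ≥ -δ}`,
`Ω₀ = {(x0,u,q) : J_{x0}(ξ̂)x0 + J_{x1}(ξ̂)x(t1) + q < 0, x = A(x0,u)}`,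
`Ω_δ = {(x0,u,q) : esssup_{M_δ}(G_x(ŵ)x + G_u(ŵ)u) + q < 0, x = A(x0,u)}`,
(the esssup condition being expressed by an a.e. upper bound `c` with `c + q < 0`), and
`Ω = {(x0,u,q) : q > 0}`. -/
theorem cones_disjoint {n m : ℕ} (t0 t1 : ℝ) (ht : t0 < t1)
    (J : (Fin n → ℝ) → (Fin n → ℝ) → ℝ)
    (f : (Fin n → ℝ) → (Fin m → ℝ) → (Fin n → ℝ))
    (G : (Fin n → ℝ) → (Fin m → ℝ) → ℝ)
    (hJ : ContDiff ℝ 1 (fun q : (Fin n → ℝ) × (Fin n → ℝ) => J q.1 q.2))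
    (hf : ContDiff ℝ 1 (fun q : (Fin n → ℝ) × (Fin m → ℝ) => f q.1 q.2))
    (hG : ContDiff ℝ 1 (fun q : (Fin n → ℝ) × (Fin m → ℝ) => G q.1 q.2))
    (xh : ℝ → (Fin n → ℝ)) (uh : ℝ → (Fin m → ℝ))
    (hmin : WeakLocalMin t0 t1 J f G xh uh)
    -- the operator `A` of the equation in variations, in integral form
    (A : (Fin n → ℝ) → (ℝ → (Fin m → ℝ)) → ℝ → (Fin n → ℝ))
    (hA : ∀ (x0 : Fin n → ℝ) (u : ℝ → (Fin m → ℝ)), Measurable u → EssBdd t0 t1 u →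
      ∀ t ∈ Icc t0 t1, A x0 u t = x0 + ∫ s in Icc t0 t,
        ((fderiv ℝ (fun x' => f x' (uh s)) (xh s)) (A x0 u s)
          + (fderiv ℝ (fun u' => f (xh s) u') (uh s)) (u s)))
    (δ : ℝ) (hδ : 0 < δ) :
    {κ : (Fin n → ℝ) × (ℝ → (Fin m → ℝ)) × ℝ |
        Measurable κ.2.1 ∧ EssBdd t0 t1 κ.2.1 ∧
        (fderiv ℝ (fun a => J a (xh t1)) (xh t0)) κ.1
          + (fderiv ℝ (fun b => J (xh t0) b) (xh t1)) (A κ.1 κ.2.1 t1) + κ.2.2 < 0}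
      ∩ {κ : (Fin n → ℝ) × (ℝ → (Fin m → ℝ)) × ℝ |
        Measurable κ.2.1 ∧ EssBdd t0 t1 κ.2.1 ∧
        ∃ c : ℝ, c + κ.2.2 < 0 ∧
          ∀ᵐ t ∂(volume.restrict {t ∈ Icc t0 t1 | -δ ≤ G (xh t) (uh t)}),
            (fderiv ℝ (fun x' => G x' (uh t)) (xh t)) (A κ.1 κ.2.1 t)
              + (fderiv ℝ (fun u' => G (xh t) u') (uh t)) (κ.2.1 t) ≤ c}
      ∩ {κ : (Fin n → ℝ) × (ℝ → (Fin m → ℝ)) × ℝ | 0 < κ.2.2}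
      = ∅ := by
  rw [eq_empty_iff_forall_notMem]
  rintro ⟨x0, u, q⟩ ⟨⟨⟨hu, ⟨Cu, hCu⟩, hJneg⟩, -, -, c, hcq, hGc⟩, hq⟩
  simp only [mem_ofPred_eq] at hu hCu hJneg hcq hGc hq
  obtain ⟨⟨huh, ⟨Cv, hCv⟩, hxi, hx, hG0⟩, r, hr, hopt⟩ := hmin
  set d : ℝ → (Fin n → ℝ) := A x0 u with hd_def
  have ht0 : t0 ∈ Icc t0 t1 := left_mem_Icc.2 ht.le
  have ht1 : t1 ∈ Icc t0 t1 := right_mem_Icc.2 ht.le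
  have hxc : ContinuousOn xh (Icc t0 t1) :=
    (continuousOn_const.add (intervalIntegral.continuousOn_primitive_Icc hxi)).congr hx
  obtain ⟨Cx, hCx⟩ := isCompact_Icc.exists_bound_of_continuousOn hxc
  set R := max Cx Cv with hR_def
  have hxR : ∀ t ∈ Icc t0 t1, ‖xh t‖ ≤ R := fun t h => (hCx t h).trans (le_max_left _ _)
  have hvR : ∀ᵐ t ∂(volume.restrict (Icc t0 t1)), ‖uh t‖ ≤ R :=
    hCv.mono fun t h => h.trans (le_max_right _ _)
  have hR : 0 ≤ R := (norm_nonneg _).trans (hxR t0 ht0)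
  have hd : ∀ t ∈ Icc t0 t1, d t = x0 + ∫ s in Icc t0 t,
      fderiv ℝ (fun w : (Fin n → ℝ) × (Fin m → ℝ) => f w.1 w.2) (xh s, uh s) (d s, u s) := by
    intro t h
    simp_rw [fderiv_prod_apply_eq_add (hf.differentiable one_ne_zero _)]
    exact hA x0 u hu ⟨Cu, hCu⟩ t h
  obtain ⟨hdc, hdi⟩ := variation_continuousOn_and_integrableOn ht.le hf hR
    (le_max_right Cu 0) huh hu hvR (hCu.mono fun t h => h.trans (le_max_left _ _)) hxR hxc hd
  obtain ⟨Cd, hCd⟩ := isCompact_Icc.exists_bound_of_continuousOn hdc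
  set B := max Cd Cu with hB_def
  have hdB : ∀ t ∈ Icc t0 t1, ‖d t‖ ≤ B := fun t h => (hCd t h).trans (le_max_left _ _)
  have huB : ∀ᵐ t ∂(volume.restrict (Icc t0 t1)), ‖u t‖ ≤ B :=
    hCu.mono fun t h => h.trans (le_max_right _ _)
  have hB : 0 ≤ B := (norm_nonneg _).trans (hdB t0 ht0)
  have hd0 : d t0 = x0 := by rw [hd t0 ht0]; simp
  obtain ⟨ρJ, hρJ, hexpJ⟩ := exists_uniform_first_order_expansion hJ R B hq
  obtain ⟨ρG, hρG, hexpG⟩ := exists_uniform_first_order_expansion hG R B hq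
  obtain ⟨C, hC⟩ := (isCompact_closedBall (0 : (Fin n → ℝ) × (Fin m → ℝ)) R)
    |>.exists_bound_of_continuousOn (hG.continuous_fderiv one_ne_zero).continuousOn
  have hC0 : 0 ≤ C := (norm_nonneg _).trans (hC 0 (by simpa using hR))
  obtain ⟨ρ, hρ, htraj⟩ := exists_trajectory_near_variation ht.le hf huh hu hvR huB hxR hdB hxc hdc
    hxi hdi hx hd (θ := min 1 (min ρJ ρG)) (by positivity)
  obtain ⟨ε, hε, hερ, hεJ, hεG, hεr, hεδ⟩ : ∃ ε > 0, ε ≤ ρ ∧ ε ≤ ρJ ∧ ε ≤ ρG ∧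
      ε * (B + 1) ≤ r ∧ ε * (C * B + q) ≤ δ := by
    refine ⟨min ρ (min ρJ (min ρG (min (r / (B + 1)) (δ / (C * B + q))))), by positivity,
      by simp, by simp, by simp, ?_, ?_⟩
    · rw [← le_div_iff₀ (by positivity)]; simp
    · rw [← le_div_iff₀ (by positivity)]; simp
  obtain ⟨y, hyi, hy, hyd⟩ := htraj ε hε hερ
  have hy0 : y t0 = xh t0 + ε • x0 := by rw [hy t0 ht0]; simp
  have hydJ : ∀ t ∈ Icc t0 t1, ‖y t - xh t - ε • d t‖ ≤ ρJ * ε := fun t h =>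
    (hyd t h).trans (by gcongr; simp)
  have hydG : ∀ t ∈ Icc t0 t1, ‖y t - xh t - ε • d t‖ ≤ ρG * ε := fun t h =>
    (hyd t h).trans (by gcongr; simp)
  have hadm : Admissible t0 t1 f G y (fun t => uh t + ε • u t) := by
    refine ⟨huh.add (hu.const_smul ε), ⟨R + ε * B, ?_⟩, hyi, fun t h => ?_, ?_⟩
    · filter_upwards [hvR, huB] with t h1 h2
      refine (norm_add_le _ _).trans (add_le_add h1 ?_)
      rw [norm_smul, Real.norm_of_nonneg hε.le]
      gcongr
    · rw [hy0]; exact hy t h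
    · have hGc' := (ae_restrict_of_ae (s := Icc t0 t1) (ae_imp_of_ae_restrict hGc))
      filter_upwards [ae_restrict_mem measurableSet_Icc, hvR, huB, hG0, hGc'] with t h h1 h2 h3 h4
      have hw : ‖(xh t, uh t)‖ ≤ R := max_le (hxR t h) h1
      have hwd : ‖(d t, u t)‖ ≤ B := max_le (hdB t h) h2
      have h5 := hexpG ε hε hεG (xh t, uh t) (d t, u t) (y t, uh t + ε • u t) hw hwd (by
        simp only [Prod.smul_mk, Prod.mk_sub_mk, add_sub_cancel_left, sub_self]
        refine max_le (hydG t h) ?_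
        rw [norm_zero]
        positivity)
      rw [Real.norm_eq_abs, smul_eq_mul] at h5
      have h6 := (abs_le.1 h5).2
      simp only at h6
      by_cases hM : -δ ≤ G (xh t) (uh t)
      · have h7 := h4 ⟨h, hM⟩
        rw [← fderiv_prod_apply_eq_add (hG.differentiable one_ne_zero _)] at h7
        have h8 := mul_le_mul_of_nonneg_left h7 hε.le
        have h9 : ε * (c + q) ≤ 0 := mul_nonpos_of_nonneg_of_nonpos hε.le hcq.le
        linarith
      · push Not at hM
        have h7 : fderiv ℝ (fun w : (Fin n → ℝ) × (Fin m → ℝ) => G w.1 w.2) (xh t, uh t)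
            (d t, u t) ≤ C * B :=
          (le_abs_self _).trans ((ContinuousLinearMap.le_of_opNorm_le _
            (hC _ (mem_closedBall_zero_iff.2 hw)) _).trans (by gcongr))
        have h8 := mul_le_mul_of_nonneg_left h7 hε.le
        linarith
  have hle := hopt y _ hadm
    (fun t h => by
      calc ‖y t - xh t‖ = ‖(y t - xh t - ε • d t) + ε • d t‖ := by rw [sub_add_cancel]
        _ ≤ 1 * ε + ε * B := by
          refine (norm_add_le _ _).trans (add_le_add ((hyd t h).trans ?_) ?_)
          · gcongr; exact min_le_left _ _
          · rw [norm_smul, Real.norm_of_nonneg hε.le]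
            gcongr
            exact hdB t h
        _ = ε * (B + 1) := by ring
        _ ≤ r := hεr)
    (by
      filter_upwards [huB] with t h
      rw [add_sub_cancel_left, norm_smul, Real.norm_of_nonneg hε.le]
      refine le_trans ?_ hεr
      gcongr
      linarith)
  have h1 := hexpJ ε hε hεJ (xh t0, xh t1) (d t0, d t1) (y t0, y t1)
    (max_le (hxR t0 ht0) (hxR t1 ht1)) (max_le (hdB t0 ht0) (hdB t1 ht1))
    (max_le (hydJ t0 ht0) (hydJ t1 ht1))
  rw [fderiv_prod_apply_eq_add (hJ.differentiable one_ne_zero _), hd0, Real.norm_eq_abs,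
    smul_eq_mul] at h1
  have h2 := (abs_le.1 h1).2
  simp only at h2
  have h3 := mul_neg_of_pos_of_neg hε hJneg
  linarith
end

section
/- Let ŵ = (x̂,û) be admissible for Problem P, δ > 0, and assume mes M_δ > 0. Let Y = R^{n*} × L^1([t0,t1],R^{m*}) × R with pairing ⟨(c0,v,r),(x0,u,q)⟩ = c0·x0 + ∫_{t0}^{t1} v(t)u(t)dt + r·q, so that X := Y* = R^n × L^∞([t0,t1],R^m) × R. Let H_δ ⊆ Y be the cone of all functionals y that act on κ = (x0,u,q) ∈ X by ⟨y,κ⟩ = −∫_{t0}^{t1} λ(t)·( G_x(ŵ(t))x(t) + G_u(ŵ(t))u(t) + q )dt, where x = A(x0,u), for some λ ∈ L^1([t0,t1],R) with λ ≥ 0 and λ = 0 a.e. outside M_δ. Then the dual cone of H_δ equals the norm-closure of Ω_δ: H_δ* = cl Ω_δ = {κ ∈ X : esssup_{t∈M_δ}(G_x(ŵ(t))x(t) + G_u(ŵ(t))u(t)) + q ≤ 0, where x = A(x0,u)}. -/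
open MeasureTheory Set Filter

/-- The linearized mixed-constraint expression `G_x(ŵ(t)) x(t) + G_u(ŵ(t)) u(t)`, where
`x = A(x0, u)` and `κ = (x0, u, q)`. -/
noncomputable def Gexpr {n m : ℕ}
    (G : (Fin n → ℝ) → (Fin m → ℝ) → ℝ)
    (xh : ℝ → (Fin n → ℝ)) (uh : ℝ → (Fin m → ℝ))
    (A : (Fin n → ℝ) → (ℝ → (Fin m → ℝ)) → ℝ → (Fin n → ℝ))
    (κ : (Fin n → ℝ) × (ℝ → (Fin m → ℝ)) × ℝ) (t : ℝ) : ℝ :=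
  (fderiv ℝ (fun x' => G x' (uh t)) (xh t)) (A κ.1 κ.2.1 t)
    + (fderiv ℝ (fun u' => G (xh t) u') (uh t)) (κ.2.1 t)

/-- The open cone `Ω_δ ⊆ X = ℝⁿ × L^∞ × ℝ`:
`esssup_{t ∈ M_δ} (G_x(ŵ)x + G_u(ŵ)u) + q < 0` where `x = A(x0,u)`
(expressed by an a.e. upper bound `c` with `c + q < 0`). -/
noncomputable def OmegaDelta {n m : ℕ} (t0 t1 : ℝ)
    (G : (Fin n → ℝ) → (Fin m → ℝ) → ℝ)
    (xh : ℝ → (Fin n → ℝ)) (uh : ℝ → (Fin m → ℝ))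
    (A : (Fin n → ℝ) → (ℝ → (Fin m → ℝ)) → ℝ → (Fin n → ℝ))
    (Mδ : Set ℝ) : Set ((Fin n → ℝ) × (ℝ → (Fin m → ℝ)) × ℝ) :=
  {κ | Measurable κ.2.1 ∧ EssBdd t0 t1 κ.2.1 ∧
    ∃ c : ℝ, c + κ.2.2 < 0 ∧
      ∀ᵐ t ∂(volume.restrict Mδ), Gexpr G xh uh A κ t ≤ c}

section LinearIntegralEquation

variable {E : Type*} [NormedAddCommGroup E] [NormedSpace ℝ E]

/-- Integral form of Grönwall's inequality for a solution of `y t = y₀ + ∫ g` with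
`‖g‖ ≤ K ‖y‖ + B` almost everywhere. -/
lemma norm_le_exp_of_integral_eq {t0 T K B : ℝ} (hK : 0 ≤ K) (hB : 0 ≤ B)
    {y g : ℝ → E} {y0 : E} (hg : IntegrableOn g (Icc t0 T))
    (hgy : ∀ᵐ s ∂(volume.restrict (Icc t0 T)), ‖g s‖ ≤ K * ‖y s‖ + B)
    (hy : ∀ t ∈ Icc t0 T, y t = y0 + ∫ s in Icc t0 t, g s) :
    ∀ t ∈ Icc t0 T, ‖y t‖ ≤ (‖y0‖ + B * (T - t0)) * Real.exp (K * (T - t0)) := by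
  intro t ht
  have hT : t0 ≤ T := ht.1.trans ht.2
  have hyc : ContinuousOn y (Icc t0 T) :=
    (continuousOn_const.add (intervalIntegral.continuousOn_primitive_Icc hg)).congr hy
  set z : ℝ → E := IccExtend hT ((Icc t0 T).domRestrict y) with hz
  have hzc : Continuous z := hyc.domRestrict.Icc_extend'
  have hzy : ∀ s ∈ Icc t0 T, z s = y s := fun s hs => by
    rw [hz, IccExtend_of_mem _ _ hs, domRestrict_apply]
  set φ : ℝ → ℝ := fun s => ‖y0‖ + B * (T - t0) + ∫ r in t0..s, K * ‖z r‖ with hφ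
  have hzK : Continuous fun r => K * ‖z r‖ := continuous_const.mul hzc.norm
  have hφd : ∀ s, HasDerivAt φ (K * ‖z s‖) s := fun s =>
    (hzK.integral_hasStrictDerivAt t0 s).hasDerivAt.const_add _
  have hyφ : ∀ s ∈ Icc t0 T, ‖y s‖ ≤ φ s := by
    intro s hs
    have hsub : Icc t0 s ⊆ Icc t0 T := Icc_subset_Icc_right hs.2
    have hint : IntegrableOn (fun r => K * ‖z r‖) (Icc t0 s) :=
      hzK.continuousOn.integrableOn_Icc
    have hle : ‖∫ r in Icc t0 s, g r‖ ≤ ∫ r in Icc t0 s, (K * ‖z r‖ + B) := by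
      refine norm_integral_le_of_norm_le (hint.add (integrable_const B)) ?_
      filter_upwards [ae_restrict_of_ae_restrict_of_subset hsub hgy,
        ae_restrict_mem measurableSet_Icc] with r hr hrm
      rwa [hzy r (hsub hrm)]
    have heq : ∫ r in Icc t0 s, (K * ‖z r‖ + B)
        = (∫ r in t0..s, K * ‖z r‖) + B * (s - t0) := by
      rw [integral_add hint (integrable_const B), integral_Icc_eq_integral_Ioc,
        intervalIntegral.integral_of_le hs.1]
      simp [hs.1, mul_comm]
    have hBs : B * (s - t0) ≤ B * (T - t0) :=
      mul_le_mul_of_nonneg_left (by linarith [hs.2]) hB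
    calc ‖y s‖ ≤ ‖y0‖ + ‖∫ r in Icc t0 s, g r‖ := by
          rw [hy s hs]; exact norm_add_le _ _
      _ ≤ φ s := by simp only [hφ]; linarith
  have hδ : 0 ≤ ‖y0‖ + B * (T - t0) :=
    add_nonneg (norm_nonneg _) (mul_nonneg hB (sub_nonneg.2 hT))
  have key := norm_le_gronwallBound_of_norm_deriv_right_le
    (f := φ) (f' := fun s => K * ‖z s‖) (δ := ‖y0‖ + B * (T - t0)) (K := K) (ε := 0)
    (a := t0) (b := T) (fun s _ => (hφd s).continuousAt.continuousWithinAt)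
    (fun s _ => (hφd s).hasDerivWithinAt)
    (by simp [hφ, abs_of_nonneg hδ])
    (fun s hs => by
      have hs' := Ico_subset_Icc_self hs
      rw [Real.norm_of_nonneg (mul_nonneg hK (norm_nonneg _)), hzy s hs', add_zero]
      exact mul_le_mul_of_nonneg_left ((hyφ s hs').trans (Real.le_norm_self _)) hK) t ht
  rw [gronwallBound_ε0] at key
  calc ‖y t‖ ≤ ‖φ t‖ := (hyφ t ht).trans (Real.le_norm_self _)
    _ ≤ _ := key
    _ ≤ _ := by gcongr; exact ht.2

/-- A solution of a linear Volterra equation with essentially bounded coefficients has an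
integrable right-hand side, even if the integral is a priori allowed to be ill-defined. -/
lemma integrableOn_of_linear_integral_eq {t0 t1 K B : ℝ} (ht : t0 ≤ t1) (hK : 0 ≤ K) (hB : 0 ≤ B)
    {a : ℝ → E →L[ℝ] E} {b y : ℝ → E} {y0 : E}
    (ha : AEStronglyMeasurable a (volume.restrict (Icc t0 t1)))
    (hb : AEStronglyMeasurable b (volume.restrict (Icc t0 t1)))
    (haK : ∀ᵐ s ∂(volume.restrict (Icc t0 t1)), ‖a s‖ ≤ K)
    (hbB : ∀ᵐ s ∂(volume.restrict (Icc t0 t1)), ‖b s‖ ≤ B)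
    (hy : ∀ t ∈ Icc t0 t1, y t = y0 + ∫ s in Icc t0 t, (a s (y s) + b s)) :
    IntegrableOn (fun s => a s (y s) + b s) (Icc t0 t1) := by
  set g : ℝ → E := fun s => a s (y s) + b s with hg
  have hgy : ∀ᵐ s ∂(volume.restrict (Icc t0 t1)), ‖g s‖ ≤ K * ‖y s‖ + B := by
    filter_upwards [haK, hbB] with s h1 h2
    exact (norm_add_le _ _).trans (add_le_add ((a s).le_of_opNorm_le h1 _) h2)
  set S : Set ℝ := {t | t ∈ Icc t0 t1 ∧ IntegrableOn g (Icc t0 t)} with hS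
  have hcont : ∀ t ∈ S, ContinuousOn y (Icc t0 t) := fun t hts =>
    (continuousOn_const.add (intervalIntegral.continuousOn_primitive_Icc hts.2)).congr
      fun s hs => hy s ⟨hs.1, hs.2.trans hts.1.2⟩
  set C := (‖y0‖ + B * (t1 - t0)) * Real.exp (K * (t1 - t0)) with hC
  have hbound : ∀ t ∈ Icc t0 t1, ‖y t‖ ≤ C := by
    intro t htm
    by_cases hts : t ∈ S
    · have hsub : Icc t0 t ⊆ Icc t0 t1 := Icc_subset_Icc_right htm.2
      refine (norm_le_exp_of_integral_eq hK hB hts.2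
        (ae_restrict_of_ae_restrict_of_subset hsub hgy) (fun s hs => hy s (hsub hs)) t
        ⟨htm.1, le_rfl⟩).trans ?_
      have := htm.1
      have := htm.2
      rw [hC]
      gcongr
    · have h0 : ¬ IntegrableOn g (Icc t0 t) := fun h => hts ⟨htm, h⟩
      rw [hy t htm, integral_undef h0, add_zero, hC]
      have h1 : 0 ≤ B * (t1 - t0) := mul_nonneg hB (sub_nonneg.2 ht)
      have h2 : 1 ≤ Real.exp (K * (t1 - t0)) :=
        Real.one_le_exp (mul_nonneg hK (sub_nonneg.2 ht))
      nlinarith [norm_nonneg y0]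
  have hSb : BddAbove S := ⟨t1, fun t h => h.1.2⟩
  have hmem0 : t0 ∈ S := ⟨⟨le_rfl, ht⟩, by simp⟩
  set T := sSup S with hT
  have hmeas : AEStronglyMeasurable y (volume.restrict (Icc t0 t1)) := by
    have h1 : AEStronglyMeasurable y (volume.restrict (Ico t0 T)) := by
      refine ContinuousOn.aestronglyMeasurable (fun s hs => ?_) measurableSet_Ico
      obtain ⟨r, hr, hsr⟩ := exists_lt_of_lt_csSup ⟨t0, hmem0⟩ hs.2
      have hc := hcont r hr s ⟨hs.1, hsr.le⟩
      refine hc.mono_of_mem_nhdsWithin ?_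
      filter_upwards [self_mem_nhdsWithin, mem_nhdsWithin_of_mem_nhds (Iio_mem_nhds hsr)]
        with x hx hxr
      exact ⟨hx.1, le_of_lt hxr⟩
    have h2 : AEStronglyMeasurable y (volume.restrict (Ioc T t1)) := by
      refine ContinuousOn.aestronglyMeasurable
        ((continuousOn_const (c := y0)).congr fun s hs => ?_) measurableSet_Ioc
      have hsm : s ∈ Icc t0 t1 := ⟨(le_csSup hSb hmem0).trans hs.1.le, hs.2⟩
      have h0 : ¬ IntegrableOn g (Icc t0 s) := fun h =>
        (le_csSup hSb (show s ∈ S from ⟨hsm, h⟩)).not_gt hs.1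
      rw [hy s hsm, integral_undef h0, add_zero]
    have h3 : AEStronglyMeasurable y (volume.restrict {T}) := by
      simp
    refine (aestronglyMeasurable_union_iff.2
      ⟨aestronglyMeasurable_union_iff.2 ⟨h1, h2⟩, h3⟩).mono_measure
      (Measure.restrict_mono_set _ fun s hs => ?_)
    rcases lt_trichotomy s T with h | h | h
    · exact Or.inl (Or.inl ⟨hs.1, h⟩)
    · exact Or.inr h
    · exact Or.inl (Or.inr ⟨h, hs.2⟩)
  refine Integrable.of_bound (C := K * C + B)
    (((ContinuousLinearMap.id ℝ (E →L[ℝ] E)).aestronglyMeasurable_comp₂ ha hmeas).add hb) ?_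
  filter_upwards [hgy, ae_restrict_mem measurableSet_Icc] with s hs hsm
  exact hs.trans (by gcongr; exact hbound s hsm)

end LinearIntegralEquation

/-- Composing a continuous function with a continuous state and an essentially bounded control
yields a measurable, essentially bounded function. -/
lemma aestronglyMeasurable_and_bounded_comp {E Z : Type*} [NormedAddCommGroup E]
    [ProperSpace E] [NormedAddCommGroup Z] {k : ℕ} {t0 t1 : ℝ}
    {Φ : E × (Fin k → ℝ) → Z} (hΦ : Continuous Φ) {x : ℝ → E} {u : ℝ → (Fin k → ℝ)}
    (hx : ContinuousOn x (Icc t0 t1)) (hu : Measurable u) (hub : EssBdd t0 t1 u) :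
    AEStronglyMeasurable (fun t => Φ (x t, u t)) (volume.restrict (Icc t0 t1)) ∧
      ∃ K : ℝ, 0 ≤ K ∧ ∀ᵐ t ∂(volume.restrict (Icc t0 t1)), ‖Φ (x t, u t)‖ ≤ K := by
  refine ⟨hΦ.comp_aestronglyMeasurable ((hx.aestronglyMeasurable measurableSet_Icc).prodMk
    hu.aestronglyMeasurable), ?_⟩
  obtain ⟨C, hC⟩ := hub
  obtain ⟨K, hK⟩ := ((isCompact_Icc.image_of_continuousOn hx).prod
    (isCompact_closedBall (0 : Fin k → ℝ) C)).exists_bound_of_continuousOn hΦ.continuousOn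
  refine ⟨max K 0, le_max_right _ _, ?_⟩
  filter_upwards [hC, ae_restrict_mem measurableSet_Icc] with t h1 h2
  exact (hK _ ⟨mem_image_of_mem x h2, by simpa using h1⟩).trans (le_max_left _ _)

section PartialDerivatives

variable {E F Z : Type*} [NormedAddCommGroup E] [NormedSpace ℝ E] [NormedAddCommGroup F]
  [NormedSpace ℝ F] [NormedAddCommGroup Z] [NormedSpace ℝ Z] {Φ : E → F → Z}

lemma fderiv_fst_eq_comp_inl (hΦ : ContDiff ℝ 1 fun q : E × F => Φ q.1 q.2) (x : E) (u : F) :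
    fderiv ℝ (fun x' => Φ x' u) x
      = (fderiv ℝ (fun q : E × F => Φ q.1 q.2) (x, u)).comp (ContinuousLinearMap.inl ℝ E F) :=
  HasFDerivAt.fderiv
    (HasFDerivAt.comp (g := fun q : E × F => Φ q.1 q.2) (f := fun x' => (x', u)) x
      (hΦ.differentiable one_ne_zero (x, u)).hasFDerivAt (hasFDerivAt_prodMk_left x u))

lemma fderiv_snd_eq_comp_inr (hΦ : ContDiff ℝ 1 fun q : E × F => Φ q.1 q.2) (x : E) (u : F) :
    fderiv ℝ (fun u' => Φ x u') u
      = (fderiv ℝ (fun q : E × F => Φ q.1 q.2) (x, u)).comp (ContinuousLinearMap.inr ℝ E F) :=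
  HasFDerivAt.fderiv
    (HasFDerivAt.comp (g := fun q : E × F => Φ q.1 q.2) (f := fun u' => (x, u')) u
      (hΦ.differentiable one_ne_zero (x, u)).hasFDerivAt (hasFDerivAt_prodMk_right x u))

lemma continuous_fderiv_fst (hΦ : ContDiff ℝ 1 fun q : E × F => Φ q.1 q.2) :
    Continuous fun q : E × F => fderiv ℝ (fun x' => Φ x' q.2) q.1 := by
  simp only [fderiv_fst_eq_comp_inl hΦ]
  exact (hΦ.continuous_fderiv one_ne_zero).clm_comp continuous_const

lemma continuous_fderiv_snd (hΦ : ContDiff ℝ 1 fun q : E × F => Φ q.1 q.2) :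
    Continuous fun q : E × F => fderiv ℝ (fun u' => Φ q.1 u') q.2 := by
  simp only [fderiv_snd_eq_comp_inr hΦ]
  exact (hΦ.continuous_fderiv one_ne_zero).clm_comp continuous_const

end PartialDerivatives

/-- the dual cone of `H_δ` equals the norm-closure of `Ω_δ`, which is the
set `{κ : esssup_{M_δ}(G_x(ŵ)x + G_u(ŵ)u) + q ≤ 0}`.  The cone `H_δ ⊆ Y` consists of the
functionals `κ ↦ -∫ λ(t)(G_x(ŵ)x + G_u(ŵ)u + q)dt` over nonnegative `λ ∈ L¹` vanishing
outside `M_δ`; its dual cone is accordingly the set of all `κ ∈ X` on which every such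
functional is nonnegative.  The norm-closure of `Ω_δ` in `X = ℝⁿ × L^∞ × ℝ` is expressed
by `ε`-approximation in each component (with the `L^∞` distance on the middle one). -/
theorem dual_cone_H_delta {n m : ℕ} (t0 t1 : ℝ) (ht : t0 < t1)
    (f : (Fin n → ℝ) → (Fin m → ℝ) → (Fin n → ℝ))
    (G : (Fin n → ℝ) → (Fin m → ℝ) → ℝ)
    (hf : ContDiff ℝ 1 (fun q : (Fin n → ℝ) × (Fin m → ℝ) => f q.1 q.2))
    (hG : ContDiff ℝ 1 (fun q : (Fin n → ℝ) × (Fin m → ℝ) => G q.1 q.2))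
    (xh : ℝ → (Fin n → ℝ)) (uh : ℝ → (Fin m → ℝ))
    (hadm : Admissible t0 t1 f G xh uh)
    (A : (Fin n → ℝ) → (ℝ → (Fin m → ℝ)) → ℝ → (Fin n → ℝ))
    (hA : ∀ (x0 : Fin n → ℝ) (u : ℝ → (Fin m → ℝ)), Measurable u → EssBdd t0 t1 u →
      ∀ t ∈ Icc t0 t1, A x0 u t = x0 + ∫ s in Icc t0 t,
        ((fderiv ℝ (fun x' => f x' (uh s)) (xh s)) (A x0 u s)
          + (fderiv ℝ (fun u' => f (xh s) u') (uh s)) (u s)))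
    (δ : ℝ) (hδ : 0 < δ)
    (Mδ : Set ℝ) (hMδ : Mδ = {t ∈ Icc t0 t1 | -δ ≤ G (xh t) (uh t)})
    (hMδpos : 0 < volume Mδ) :
    -- the dual cone of `H_δ` ...
    {κ : (Fin n → ℝ) × (ℝ → (Fin m → ℝ)) × ℝ |
        Measurable κ.2.1 ∧ EssBdd t0 t1 κ.2.1 ∧
        ∀ lam : ℝ → ℝ, IntegrableOn lam (Icc t0 t1) →
          (∀ᵐ t ∂(volume.restrict (Icc t0 t1)), 0 ≤ lam t) →
          (∀ᵐ t ∂(volume.restrict (Icc t0 t1)), t ∉ Mδ → lam t = 0) →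
          0 ≤ -(∫ t in Icc t0 t1, lam t * (Gexpr G xh uh A κ t + κ.2.2))}
      -- ... equals the norm-closure of `Ω_δ` ...
      = {κ : (Fin n → ℝ) × (ℝ → (Fin m → ℝ)) × ℝ |
          Measurable κ.2.1 ∧ EssBdd t0 t1 κ.2.1 ∧
          ∀ ε > (0:ℝ), ∃ κ' ∈ OmegaDelta t0 t1 G xh uh A Mδ,
            ‖κ.1 - κ'.1‖ < ε ∧
            (∀ᵐ t ∂(volume.restrict (Icc t0 t1)), ‖κ.2.1 t - κ'.2.1 t‖ < ε) ∧
            |κ.2.2 - κ'.2.2| < ε}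
      -- ... and both equal the explicit description of `cl Ω_δ`:
      ∧ {κ : (Fin n → ℝ) × (ℝ → (Fin m → ℝ)) × ℝ |
          Measurable κ.2.1 ∧ EssBdd t0 t1 κ.2.1 ∧
          ∀ ε > (0:ℝ), ∃ κ' ∈ OmegaDelta t0 t1 G xh uh A Mδ,
            ‖κ.1 - κ'.1‖ < ε ∧
            (∀ᵐ t ∂(volume.restrict (Icc t0 t1)), ‖κ.2.1 t - κ'.2.1 t‖ < ε) ∧
            |κ.2.2 - κ'.2.2| < ε}
        = {κ : (Fin n → ℝ) × (ℝ → (Fin m → ℝ)) × ℝ |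
            Measurable κ.2.1 ∧ EssBdd t0 t1 κ.2.1 ∧
            ∀ᵐ t ∂(volume.restrict Mδ), Gexpr G xh uh A κ t + κ.2.2 ≤ 0} := by
  obtain ⟨huhm, huhb, hfint, hxh, -⟩ := hadm
  have hxc : ContinuousOn xh (Icc t0 t1) :=
    (continuousOn_const.add (intervalIntegral.continuousOn_primitive_Icc hfint)).congr hxh
  have hMsub : Mδ ⊆ Icc t0 t1 := hMδ ▸ sep_subset _ _
  have hMmeas : MeasurableSet Mδ := by
    set z := IccExtend ht.le ((Icc t0 t1).domRestrict xh) with hz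
    have hzc : Continuous z := hxc.domRestrict.Icc_extend'
    have heq : Mδ = Icc t0 t1 ∩ {t | -δ ≤ G (z t) (uh t)} := by
      rw [hMδ]
      ext t
      refine and_congr_right fun h => ?_
      rw [mem_ofPred_eq, hz, IccExtend_of_mem _ _ h, domRestrict_apply]
    rw [heq]
    exact measurableSet_Icc.inter (measurableSet_le measurable_const
      (hG.continuous.measurable.comp (hzc.measurable.prodMk huhm)))
  have hMle : ∀ {p : ℝ → Prop}, (∀ᵐ t ∂(volume.restrict (Icc t0 t1)), p t) →
      ∀ᵐ t ∂(volume.restrict Mδ), p t := ae_restrict_of_ae_restrict_of_subset hMsub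
  obtain ⟨hfxm, Kx, hKx, hfxK⟩ :=
    aestronglyMeasurable_and_bounded_comp (continuous_fderiv_fst hf) hxc huhm huhb
  obtain ⟨hfum, Ku, hKu, hfuK⟩ :=
    aestronglyMeasurable_and_bounded_comp (continuous_fderiv_snd hf) hxc huhm huhb
  obtain ⟨hGxm, Lx, hLx, hGxL⟩ :=
    aestronglyMeasurable_and_bounded_comp (continuous_fderiv_fst hG) hxc huhm huhb
  obtain ⟨hGum, Lu, hLu, hGuL⟩ :=
    aestronglyMeasurable_and_bounded_comp (continuous_fderiv_snd hG) hxc huhm huhb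
  have hAint : ∀ (x0 : Fin n → ℝ) (u : ℝ → (Fin m → ℝ)), Measurable u → EssBdd t0 t1 u →
      IntegrableOn (fun s => (fderiv ℝ (fun x' => f x' (uh s)) (xh s)) (A x0 u s)
          + (fderiv ℝ (fun u' => f (xh s) u') (uh s)) (u s)) (Icc t0 t1) := by
    intro x0 u hu ⟨C, hC⟩
    refine integrableOn_of_linear_integral_eq ht.le hKx (mul_nonneg hKu (le_max_right C 0)) hfxm
      ((ContinuousLinearMap.id ℝ _).aestronglyMeasurable_comp₂ hfum hu.aestronglyMeasurable)
      hfxK ?_ (hA x0 u hu ⟨C, hC⟩)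
    filter_upwards [hfuK, hC] with t h1 h2
    exact ContinuousLinearMap.le_of_opNorm_le_of_le _ h1 (h2.trans (le_max_left C 0))
  have hAcont : ∀ (x0 : Fin n → ℝ) (u : ℝ → (Fin m → ℝ)), Measurable u → EssBdd t0 t1 u →
      ContinuousOn (A x0 u) (Icc t0 t1) := fun x0 u hu hub =>
    (continuousOn_const.add (intervalIntegral.continuousOn_primitive_Icc
      (hAint x0 u hu hub))).congr (hA x0 u hu hub)
  set D := (1 + Ku * (t1 - t0)) * Real.exp (Kx * (t1 - t0)) with hD
  have hD0 : 0 ≤ D := by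
    have := sub_nonneg.2 ht.le
    positivity
  have hAlip : ∀ (x0 x0' : Fin n → ℝ) (u u' : ℝ → (Fin m → ℝ)), Measurable u → EssBdd t0 t1 u →
      Measurable u' → EssBdd t0 t1 u' → ∀ ε : ℝ, 0 ≤ ε → ‖x0 - x0'‖ ≤ ε →
      (∀ᵐ t ∂(volume.restrict (Icc t0 t1)), ‖u t - u' t‖ ≤ ε) →
      ∀ t ∈ Icc t0 t1, ‖A x0 u t - A x0' u' t‖ ≤ D * ε := by
    intro x0 x0' u u' hu hub hu' hub' ε hε hx0 huu t htm
    have h1 := hAint x0 u hu hub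
    have h2 := hAint x0' u' hu' hub'
    have key := norm_le_exp_of_integral_eq (y := fun t => A x0 u t - A x0' u' t)
      (y0 := x0 - x0') hKx (mul_nonneg hKu hε) (h1.sub h2) ?_ ?_ t htm
    · refine key.trans ?_
      have := sub_nonneg.2 ht.le
      calc _ ≤ (ε + Ku * ε * (t1 - t0)) * Real.exp (Kx * (t1 - t0)) := by gcongr
        _ = D * ε := by rw [hD]; ring
    · filter_upwards [hfxK, hfuK, huu] with s k1 k2 k3
      simp only [Pi.sub_apply]
      rw [add_sub_add_comm, ← map_sub, ← map_sub]
      exact (norm_add_le _ _).trans (add_le_add (ContinuousLinearMap.le_of_opNorm_le _ k1 _)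
        (ContinuousLinearMap.le_of_opNorm_le_of_le _ k2 k3))
    · intro s hs
      have hsub : Icc t0 s ⊆ Icc t0 t1 := Icc_subset_Icc_right hs.2
      simp only [Pi.sub_apply]
      rw [integral_sub (h1.mono_set hsub) (h2.mono_set hsub), hA x0 u hu hub s hs,
        hA x0' u' hu' hub' s hs, add_sub_add_comm]
  have hclosure : {κ : (Fin n → ℝ) × (ℝ → (Fin m → ℝ)) × ℝ |
          Measurable κ.2.1 ∧ EssBdd t0 t1 κ.2.1 ∧
          ∀ ε > (0:ℝ), ∃ κ' ∈ OmegaDelta t0 t1 G xh uh A Mδ,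
            ‖κ.1 - κ'.1‖ < ε ∧
            (∀ᵐ t ∂(volume.restrict (Icc t0 t1)), ‖κ.2.1 t - κ'.2.1 t‖ < ε) ∧
            |κ.2.2 - κ'.2.2| < ε}
        = {κ : (Fin n → ℝ) × (ℝ → (Fin m → ℝ)) × ℝ |
            Measurable κ.2.1 ∧ EssBdd t0 t1 κ.2.1 ∧
            ∀ᵐ t ∂(volume.restrict Mδ), Gexpr G xh uh A κ t + κ.2.2 ≤ 0} := by
    ext ⟨x0, u, q⟩
    refine and_congr_right fun hu => and_congr_right fun hub => ⟨fun h => ?_, fun h ε hε => ?_⟩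
    · have happrox : ∀ k : ℕ, ∀ᵐ t ∂(volume.restrict Mδ),
          Gexpr G xh uh A (x0, u, q) t + q ≤ (Lx * D + Lu + 1) * (1 / ((k : ℝ) + 1)) := by
        intro k
        have hε : (0 : ℝ) < 1 / ((k : ℝ) + 1) := by positivity
        set ε := 1 / ((k : ℝ) + 1)
        obtain ⟨⟨x0', u', q'⟩, ⟨hu', hub', c, hc, hle⟩, hx, huu, hq⟩ := h ε hε
        simp only at hu' hub' hc hx huu hq
        have huu' := huu.mono fun t ht => ht.le
        filter_upwards [hle, hMle hGxL, hMle hGuL, hMle huu', ae_restrict_mem hMmeas]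
          with t k1 k2 k3 k4 htM
        have k5 := hAlip x0 x0' u u' hu hub hu' hub' ε hε.le hx.le huu' t (hMsub htM)
        have k6 := (Real.le_norm_self _).trans
          (ContinuousLinearMap.le_of_opNorm_le_of_le _ k2 k5)
        have k7 := (Real.le_norm_self _).trans
          (ContinuousLinearMap.le_of_opNorm_le_of_le _ k3 k4)
        rw [map_sub] at k6 k7
        simp only [Gexpr] at k1 ⊢
        have := (abs_lt.1 hq).2
        linarith
      filter_upwards [ae_all_iff.2 happrox] with t hk
      have hlim := (tendsto_one_div_add_atTop_nhds_zero_nat (𝕜 := ℝ)).const_mul (Lx * D + Lu + 1)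
      rw [mul_zero] at hlim
      exact ge_of_tendsto' hlim hk
    · refine ⟨(x0, u, q - ε / 2), ⟨hu, hub, -q, by simp only; linarith, ?_⟩, by simpa using hε,
        ae_of_all _ fun t => by simpa using hε, ?_⟩
      · filter_upwards [h] with t k
        simp only [Gexpr] at k ⊢
        linarith
      · rw [sub_sub_cancel, abs_of_pos (half_pos hε)]
        exact half_lt_self hε
  refine ⟨?_, hclosure⟩
  rw [hclosure]
  ext ⟨x0, u, q⟩
  refine and_congr_right fun hu => and_congr_right fun hub => ⟨fun h => ?_, fun h lam _ h0 hM => ?_⟩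
  · simp only at hu hub h ⊢
    set p : ℝ → ℝ := fun t => Gexpr G xh uh A (x0, u, q) t + q with hp
    have hAc := hAcont x0 u hu hub
    have hpm : AEStronglyMeasurable p (volume.restrict (Icc t0 t1)) :=
      (((ContinuousLinearMap.id ℝ _).aestronglyMeasurable_comp₂ hGxm
        (hAc.aestronglyMeasurable measurableSet_Icc)).add
        ((ContinuousLinearMap.id ℝ _).aestronglyMeasurable_comp₂ hGum
        hu.aestronglyMeasurable)).add aestronglyMeasurable_const
    obtain ⟨C, hC⟩ := hub
    obtain ⟨R, hR⟩ := isCompact_Icc.exists_bound_of_continuousOn hAc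
    obtain ⟨P, hpP⟩ : ∃ P : ℝ, ∀ᵐ t ∂(volume.restrict (Icc t0 t1)), |p t| ≤ P := by
      refine ⟨Lx * R + Lu * C + |q|, ?_⟩
      filter_upwards [hGxL, hGuL, hC, ae_restrict_mem measurableSet_Icc] with t k1 k2 k3 k4
      exact (abs_add_le _ _).trans (add_le_add_left ((abs_add_le _ _).trans (add_le_add
        (ContinuousLinearMap.le_of_opNorm_le_of_le _ k1 (hR t k4))
        (ContinuousLinearMap.le_of_opNorm_le_of_le _ k2 k3))) _)
    have hppm : AEStronglyMeasurable (fun t => max (p t) 0) (volume.restrict (Icc t0 t1)) :=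
      hpm.sup aestronglyMeasurable_const
    have hppi : IntegrableOn (fun t => max (p t) 0) (Icc t0 t1) := by
      refine Integrable.of_bound hppm P ?_
      filter_upwards [hpP] with t k
      rw [Real.norm_of_nonneg (le_max_right _ _)]
      exact max_le ((le_abs_self _).trans k) ((abs_nonneg _).trans k)
    have hsqi : IntegrableOn (fun t => max (p t) 0 * p t) (Icc t0 t1) :=
      Integrable.mul_bdd hppi hpm hpP
    have hnonneg : ∀ t, 0 ≤ max (p t) 0 * p t := fun t => by
      rcases le_total (p t) 0 with k | k
      · simp [k]
      · exact mul_nonneg (le_max_right _ _) k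
    have key := h (Mδ.indicator fun t => max (p t) 0) (hppi.indicator hMmeas)
      (ae_of_all _ fun t => indicator_nonneg (fun s _ => le_max_right _ _) t)
      (ae_of_all _ fun t k => indicator_of_notMem k _)
    have heq : ∫ t in Icc t0 t1, (Mδ.indicator (fun t => max (p t) 0) t) * p t
        = ∫ t in Mδ, max (p t) 0 * p t := by
      simp only [← indicator_mul_left]
      rw [integral_indicator hMmeas, Measure.restrict_restrict hMmeas, inter_eq_left.2 hMsub]
    have hzero : ∫ t in Mδ, max (p t) 0 * p t = 0 :=
      le_antisymm (by rw [← heq]; linarith) (integral_nonneg hnonneg)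
    filter_upwards [(setIntegral_eq_zero_iff_of_nonneg_ae (ae_of_all _ hnonneg)
      (hsqi.mono_set hMsub)).1 hzero] with t k
    by_contra! hpos
    change 0 < p t at hpos
    rw [max_eq_left hpos.le, Pi.zero_apply] at k
    exact (mul_pos hpos hpos).ne' k
  · rw [neg_nonneg]
    refine integral_nonpos_of_ae ?_
    filter_upwards [h0, hM, ae_restrict_of_ae ((ae_restrict_iff' hMmeas).1 h)] with t k1 k2 k3
    by_cases htM : t ∈ Mδ
    · exact mul_nonpos_of_nonneg_of_nonpos k1 (k3 htM)
    · simp [k2 htM]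
end

section
/- Let a_n ≥ 0 and b_n ≥ 0 be two sequences of functions in L^1([t0,t1],R), and let B_n ⊆ [t0,t1] be measurable sets with mes B_n → 0 such that ∫_{B_n} a_n(t)dt → 1 and ∫_{B_n} b_n(t)dt → 0. Then there exists a sequence of measurable sets E_n ⊆ B_n such that a_n(t) > 0 for a.e. t ∈ E_n, ∫_{E_n} a_n(t)dt → 1, and esssup_{t∈E_n} ( b_n(t)/a_n(t) ) → 0. -/
open MeasureTheory Set Filter

/-- Chebyshev-type cut: away from a measurable subset `E` of `S` on which `0 < f` and `g ≤ w * f`,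
the function `f` has integral at most `(∫ g) / w`. -/
theorem exists_measurableSet_le_mul_setIntegral_sub_le {α : Type*} [MeasurableSpace α]
    {μ : Measure α} {S : Set α} {f g : α → ℝ} {w : ℝ} (hS : MeasurableSet S)
    (hf : IntegrableOn f S μ) (hg : IntegrableOn g S μ)
    (hf0 : ∀ᵐ t ∂(μ.restrict S), 0 ≤ f t) (hg0 : ∀ᵐ t ∂(μ.restrict S), 0 ≤ g t) (hw : 0 < w) :
    ∃ E ⊆ S, MeasurableSet E ∧ (∀ᵐ t ∂(μ.restrict E), 0 < f t ∧ g t ≤ w * f t) ∧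
      ∫ t in E, f t ∂μ ≤ ∫ t in S, f t ∂μ ∧
      ∫ t in S, f t ∂μ - ∫ t in E, f t ∂μ ≤ (∫ t in S, g t ∂μ) / w := by
  obtain ⟨f', hf'm, hff'⟩ := hf.aemeasurable
  obtain ⟨g', hg'm, hgg'⟩ := hg.aemeasurable
  set E : Set α := S ∩ ({t | 0 < f' t} ∩ {t | g' t ≤ w * f' t})
  have hES : E ⊆ S := inter_subset_left
  have hEm : MeasurableSet E := hS.inter
    ((measurableSet_lt measurable_const hf'm).inter
      (measurableSet_le hg'm (hf'm.const_mul w)))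
  refine ⟨E, hES, hEm, ?_, setIntegral_mono_set hf hf0 hES.eventuallyLE, ?_⟩
  · filter_upwards [ae_restrict_of_ae_restrict_of_subset hES hff',
      ae_restrict_of_ae_restrict_of_subset hES hgg', ae_restrict_mem hEm] with t h1 h2 h3
    rw [h1, h2]
    exact h3.2
  · have hDS : S \ E ⊆ S := sdiff_subset
    rw [← setIntegral_sdiff hEm hf hES, le_div_iff₀ hw, ← integral_mul_const]
    refine le_trans ?_ (setIntegral_mono_set hg hg0 hDS.eventuallyLE)
    refine integral_mono_ae ((hf.mono_set hDS).mul_const w) (hg.mono_set hDS) ?_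
    filter_upwards [ae_restrict_of_ae_restrict_of_subset hDS hff',
      ae_restrict_of_ae_restrict_of_subset hDS hgg',
      ae_restrict_of_ae_restrict_of_subset hDS hg0,
      ae_restrict_mem (hS.diff hEm)] with t h1 h2 h3 h4
    by_contra! hlt
    refine h4.2 ⟨h4.1, ?_, ?_⟩
    · rw [mem_ofPred_eq, ← h1]
      exact pos_of_mul_pos_left (h3.trans_lt hlt) hw.le
    · rw [mem_ofPred_eq, ← h1, ← h2, mul_comm]
      exact hlt.le

/-- Lemma cut2: given `a_n ≥ 0`, `b_n ≥ 0` in `L¹([t0,t1],ℝ)` and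
measurable sets `B_n ⊆ [t0,t1]` with `mes B_n → 0`, `∫_{B_n} a_n → 1`, `∫_{B_n} b_n → 0`,
there are measurable sets `E_n ⊆ B_n` with `a_n > 0` a.e. on `E_n`, `∫_{E_n} a_n → 1`,
and `esssup_{E_n} (b_n / a_n) → 0` (expressed by a sequence `ω_n → 0` with
`b_n ≤ ω_n · a_n` a.e. on `E_n`). -/
theorem cut_lemma (t0 t1 : ℝ) (a b : ℕ → ℝ → ℝ) (B : ℕ → Set ℝ)
    (hB : ∀ k, MeasurableSet (B k) ∧ B k ⊆ Icc t0 t1)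
    (ha_int : ∀ k, IntegrableOn (a k) (Icc t0 t1))
    (hb_int : ∀ k, IntegrableOn (b k) (Icc t0 t1))
    (ha_nonneg : ∀ k, ∀ᵐ t ∂(volume.restrict (Icc t0 t1)), 0 ≤ a k t)
    (hb_nonneg : ∀ k, ∀ᵐ t ∂(volume.restrict (Icc t0 t1)), 0 ≤ b k t)
    (hBmes : Tendsto (fun k => (volume (B k)).toReal) atTop (nhds 0))
    (haB : Tendsto (fun k => ∫ t in B k, a k t) atTop (nhds 1))
    (hbB : Tendsto (fun k => ∫ t in B k, b k t) atTop (nhds 0)) :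
    ∃ E : ℕ → Set ℝ,
      (∀ k, MeasurableSet (E k) ∧ E k ⊆ B k) ∧
      (∀ k, ∀ᵐ t ∂(volume.restrict (E k)), 0 < a k t) ∧
      Tendsto (fun k => ∫ t in E k, a k t) atTop (nhds 1) ∧
      ∃ ω : ℕ → ℝ, Tendsto ω atTop (nhds 0) ∧
        ∀ k, ∀ᵐ t ∂(volume.restrict (E k)), b k t ≤ ω k * a k t := by
  set β : ℕ → ℝ := fun k => ∫ t in B k, b k t
  set ω : ℕ → ℝ := fun k => √(β k + 1 / ((k : ℝ) + 1)) with hω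
  have ha0 (k : ℕ) := ae_restrict_of_ae_restrict_of_subset (hB k).2 (ha_nonneg k)
  have hb0 (k : ℕ) := ae_restrict_of_ae_restrict_of_subset (hB k).2 (hb_nonneg k)
  have hβ0 (k : ℕ) : 0 ≤ β k := integral_nonneg_of_ae (hb0 k)
  have hpos (k : ℕ) : 0 < (1 : ℝ) / ((k : ℝ) + 1) := by positivity
  have hω0 (k : ℕ) : 0 < ω k := Real.sqrt_pos.2 (add_pos_of_nonneg_of_pos (hβ0 k) (hpos k))
  have hωlim : Tendsto ω atTop (nhds 0) := by
    simpa [hω] using (hbB.add tendsto_one_div_add_atTop_nhds_zero_nat).sqrt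
  have hβω (k : ℕ) : β k / ω k ≤ ω k := by
    rw [div_le_iff₀ (hω0 k), Real.mul_self_sqrt (add_nonneg (hβ0 k) (hpos k).le)]
    exact le_add_of_nonneg_right (hpos k).le
  choose E hEB hEm hE hle hsub using fun k =>
    exists_measurableSet_le_mul_setIntegral_sub_le (hB k).1 ((ha_int k).mono_set (hB k).2)
      ((hb_int k).mono_set (hB k).2) (ha0 k) (hb0 k) (hω0 k)
  refine ⟨E, fun k => ⟨hEm k, hEB k⟩, fun k => (hE k).mono fun t ht => ht.1, ?_, ω, hωlim,
    fun k => (hE k).mono fun t ht => ht.2⟩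
  refine tendsto_of_tendsto_of_tendsto_of_le_of_le (by simpa using haB.sub hωlim) haB
    (fun k => ?_) hle
  have := (hsub k).trans (hβω k)
  simp only
  linarith
end

section
/- Let x̂ ∈ C([t0,t1],R^n), û ∈ L^∞([t0,t1],R^m), and let G:R^{n+m}→R be continuously differentiable. Suppose there are measurable sets E^k ⊆ [t0,t1] with mes E^k → 0, nonnegative functions λ^k ∈ L^1([t0,t1],R) with λ^k = 0 a.e. outside E^k, and positive numbers δ^k → 0, ε^k → 0 such that, for each k, −δ^k ≤ G(x̂(t),û(t)) ≤ 0 and |G_u(x̂(t),û(t))| ≤ ε^k for a.e. t ∈ E^k. Assume the measures λ^k(t)dt converge weakly-* (as continuous linear functionals on C([t0,t1],R)) to a nonzero nonnegative finite Borel measure η̂, and the vector measures λ^k(t)G_x(x̂(t),û(t))dt converge weakly-* to a finite R^{n*}-valued Borel measure μ̂_B. Then there exists an η̂-measurable, essentially bounded function ŝ:[t0,t1]→R^{n*} such that μ̂_B = ŝ·η̂ (i.e., μ̂_B(B) = ∫_B ŝ dη̂ for all Borel B) and ŝ(t) ∈ conv S(x̂(t), clm(û)(t)) for η̂-almost every t;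 in particular, η̂-almost every t belongs to D. -/
open MeasureTheory Set Filter

/-- The set-valued map `t ↦ clm(û)(t)`. -/
def clmAt (t0 t1 : ℝ) {m : ℕ} (u : ℝ → (Fin m → ℝ)) (t : ℝ) : Set (Fin m → ℝ) :=
  {v | (t, v) ∈ clmSet t0 t1 u}

/-- `S(x, U) = ⋃_{v ∈ U} S(x,v)`, where `S(x,v) = {G_x(x,v)}` if `(x,v)` is a phase point
of `G` and `∅` otherwise; the values are row vectors, i.e. functionals on `ℝⁿ`. -/
def Sset {n m : ℕ} (G : (Fin n → ℝ) → (Fin m → ℝ) → ℝ)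
    (x : Fin n → ℝ) (U : Set (Fin m → ℝ)) : Set ((Fin n → ℝ) →L[ℝ] ℝ) :=
  {r | ∃ v ∈ U, G x v = 0 ∧ fderiv ℝ (fun u' => G x u') v = 0 ∧
      r = fderiv ℝ (fun x' => G x' v) x}

/-- The set `D` of times `t ∈ [t0,t1]` with `({x̂(t)} × clm(û)(t)) ∩ N(G) ≠ ∅`. -/
def Dset (t0 t1 : ℝ) {n m : ℕ} (G : (Fin n → ℝ) → (Fin m → ℝ) → ℝ)
    (xh : ℝ → (Fin n → ℝ)) (uh : ℝ → (Fin m → ℝ)) : Set ℝ :=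
  {t | t ∈ Icc t0 t1 ∧ ∃ v ∈ clmAt t0 t1 uh t,
      G (xh t) v = 0 ∧ fderiv ℝ (fun u' => G (xh t) u') v = 0}

theorem IsCompact.convexHull_of_finiteDimensional {V : Type*} [NormedAddCommGroup V]
    [NormedSpace ℝ V] [FiniteDimensional ℝ V] {s : Set V} (hs : IsCompact s) :
    IsCompact (convexHull ℝ s) := by
  have hunion : convexHull ℝ s = ⋃ k ∈ Iic (Module.finrank ℝ V + 1),
      (fun p : (Fin k → ℝ) × (Fin k → V) => ∑ i, p.1 i • p.2 i) ''
        (stdSimplex ℝ (Fin k) ×ˢ univ.pi fun _ => s) := by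
    apply Subset.antisymm
    · intro x hx
      obtain ⟨ι, _, z, w, hz, hind, hw, hw1, rfl⟩ := eq_pos_convex_span_of_mem_convexHull hx
      let e := (Fintype.equivFin ι).symm
      refine mem_biUnion (x := Fintype.card ι) ?_ ⟨(w ∘ e, z ∘ e), ⟨⟨fun i => (hw _).le, ?_⟩,
        fun i _ => hz (mem_range_self _)⟩, ?_⟩
      · exact hind.card_le_finrank_succ.trans
          (Nat.succ_le_succ (Submodule.finrank_le _))
      · exact (e.sum_comp w).trans hw1
      · exact e.sum_comp fun i => w i • z i
    · refine iUnion₂_subset fun k _ => ?_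
      rintro _ ⟨⟨w, z⟩, ⟨hw, hz⟩, rfl⟩
      exact (convex_convexHull ℝ s).sum_mem (fun i _ => hw.1 i) hw.2
        fun i _ => subset_convexHull ℝ s (hz i (mem_univ i))
  rw [hunion]
  refine (finite_Iic _).isCompact_biUnion fun k _ => IsCompact.image ?_ (by fun_prop)
  exact (isCompact_stdSimplex ℝ (Fin k)).prod (isCompact_univ_pi fun _ => hs)

theorem exists_tendsto_integral_of_isCompact {Y : Type*} [TopologicalSpace Y] [T2Space Y]
    [MeasurableSpace Y] [BorelSpace Y] {K : Set Y} (hK : IsCompact K) (ν : ℕ → Measure Y)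
    [hν : ∀ k, IsFiniteMeasure (ν k)] {C : ℝ} (hC : ∀ k, (ν k).real univ ≤ C)
    (hνK : ∀ k, ν k Kᶜ = 0) :
    ∃ (ν' : Measure Y) (f : Filter ℕ), IsFiniteMeasure ν' ∧ f.NeBot ∧ f ≤ atTop ∧ ν' Kᶜ = 0 ∧
      ∀ g : Y → ℝ, Continuous g →
        Tendsto (fun k => ∫ y, g y ∂ν k) f (nhds (∫ y, g y ∂ν')) := by
  let N : ℕ → FiniteMeasure Y := fun k => ⟨ν k, hν k⟩
  obtain ⟨ν', ⟨-, hν'K⟩, hlim⟩ :=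
    (isCompact_setOfPred_finiteMeasure_le_of_isCompact C.toNNReal hK).ultrafilter_le_nhds'
      ((hyperfilter ℕ).map N) (Ultrafilter.mem_map.2 <| univ_mem' fun k => by
        refine ⟨NNReal.le_toNNReal_of_coe_le (hC k), ?_⟩
        simp [N, FiniteMeasure.mk_apply, hνK k])
  have hν'K0 : (ν' : Measure Y) Kᶜ = 0 := (FiniteMeasure.null_iff_toMeasure_null ν' _).1 hν'K
  refine ⟨ν', hyperfilter ℕ, inferInstance, inferInstance,
    Nat.hyperfilter_le_atTop, hν'K0, fun g hg => ?_⟩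
  obtain ⟨M, hM⟩ := hK.exists_bound_of_continuousOn hg.continuousOn
  let g' : BoundedContinuousFunction Y ℝ := BoundedContinuousFunction.ofNormedAddCommGroup
    (fun y => max (-|M|) (min (g y) |M|)) (by fun_prop) |M| (fun y => by
      rw [Real.norm_eq_abs, abs_le]
      exact ⟨le_max_left _ _, max_le (by linarith [abs_nonneg M]) (min_le_right _ _)⟩)
  have hgg' : ∀ ρ : Measure Y, ρ Kᶜ = 0 → ∫ y, g' y ∂ρ = ∫ y, g y ∂ρ := fun ρ hρ => by
    refine integral_congr_ae ?_
    filter_upwards [compl_mem_ae_iff.2 hρ] with y hy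
    have hyM := abs_le.1 ((hM y (by simpa using hy)).trans (le_abs_self M))
    simp [g', min_eq_left hyM.2, max_eq_right hyM.1]
  have key := FiniteMeasure.tendsto_iff_forall_integral_tendsto.1
    (show Tendsto N (hyperfilter ℕ) (nhds ν') from hlim) g'
  rw [hgg' _ hν'K0] at key
  exact key.congr fun k => hgg' _ (hνK k)

/-- The closure of `u` with respect to Lebesgue measure is the support of the image of Lebesgue
measure on the graph of `u`. -/
theorem clmSet_eq_support (t0 t1 : ℝ) {m : ℕ} {u : ℝ → (Fin m → ℝ)} (hu : Measurable u) :
    clmSet t0 t1 u =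
      ((volume.restrict (Icc t0 t1)).map fun t => (t, u t)).support := by
  have hmeas : ∀ O : Set (ℝ × (Fin m → ℝ)), IsOpen O →
      volume (Prod.fst '' (O ∩ ((fun t => (t, u t)) '' Icc t0 t1))) =
        (volume.restrict (Icc t0 t1)).map (fun t => (t, u t)) O := fun O hO => by
    have hgraph : Measurable fun t => (t, u t) := measurable_id.prodMk hu
    rw [Measure.map_apply hgraph hO.measurableSet,
      Measure.restrict_apply (hgraph hO.measurableSet)]
    congr 1
    ext t
    constructor
    · rintro ⟨_, ⟨hpO, t', ht', rfl⟩, rfl⟩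
      exact ⟨hpO, ht'⟩
    · rintro ⟨htO, ht⟩
      exact ⟨(t, u t), ⟨htO, t, ht, rfl⟩, rfl⟩
  rw [Measure.support_eq_forall_isOpen]
  ext p
  constructor
  · intro hp O hpO hO
    exact hmeas O hO ▸ hp O hO hpO
  · intro hp O hO hpO
    exact hmeas O hO ▸ hp O hpO hO

theorem isClosed_clmSet (t0 t1 : ℝ) {m : ℕ} {u : ℝ → (Fin m → ℝ)} (hu : Measurable u) :
    IsClosed (clmSet t0 t1 u) :=
  clmSet_eq_support t0 t1 hu ▸ Measure.isClosed_support

theorem ae_mem_clmSet (t0 t1 : ℝ) {m : ℕ} {u : ℝ → (Fin m → ℝ)} (hu : Measurable u) :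
    ∀ᵐ t ∂(volume.restrict (Icc t0 t1)), (t, u t) ∈ clmSet t0 t1 u := by
  rw [clmSet_eq_support t0 t1 hu]
  exact ae_of_ae_map (measurable_id.prodMk hu).aemeasurable Measure.support_mem_ae

/-- The image of `lam dt` on the graph of `u`. -/
noncomputable def graphMeasure (t0 t1 : ℝ) {m : ℕ} (u : ℝ → (Fin m → ℝ)) (lam : ℝ → ℝ) :
    Measure (ℝ × (Fin m → ℝ)) :=
  ((volume.restrict (Icc t0 t1)).withDensity fun t => ENNReal.ofReal (lam t)).map
    fun t => (t, u t)

section graphMeasure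

variable {t0 t1 : ℝ} {m : ℕ} {u : ℝ → (Fin m → ℝ)} {lam : ℝ → ℝ}

theorem isFiniteMeasure_graphMeasure (hlam : IntegrableOn lam (Icc t0 t1)) :
    IsFiniteMeasure (graphMeasure t0 t1 u lam) := by
  have := isFiniteMeasure_withDensity_ofReal hlam.2
  unfold graphMeasure
  infer_instance

theorem ae_graphMeasure (hu : Measurable u) {p : ℝ × (Fin m → ℝ) → Prop}
    (hp : MeasurableSet {y | p y})
    (h : ∀ᵐ t ∂(volume.restrict (Icc t0 t1)), p (t, u t)) :
    ∀ᵐ y ∂graphMeasure t0 t1 u lam, p y :=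
  (ae_map_iff (measurable_id.prodMk hu).aemeasurable hp).2
    ((withDensity_absolutelyContinuous _ _).ae_le h)

theorem integral_graphMeasure (hu : Measurable u) (hlam : IntegrableOn lam (Icc t0 t1))
    (hlam0 : ∀ᵐ t ∂(volume.restrict (Icc t0 t1)), 0 ≤ lam t)
    {V : Type*} [NormedAddCommGroup V] [NormedSpace ℝ V] {g : ℝ × (Fin m → ℝ) → V}
    (hg : Continuous g) :
    ∫ y, g y ∂graphMeasure t0 t1 u lam = ∫ t in Icc t0 t1, lam t • g (t, u t) := by
  rw [graphMeasure, integral_map (φ := fun t => (t, u t)) (measurable_id.prodMk hu).aemeasurable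
    hg.aestronglyMeasurable, integral_withDensity_eq_integral_toReal_smul₀
    hlam.aemeasurable.ennreal_ofReal (by simp)]
  refine integral_congr_ae ?_
  filter_upwards [hlam0] with t h0
  simp [ENNReal.toReal_ofReal h0]

end graphMeasure

section partialDerivatives

variable {X U : Type*} [NormedAddCommGroup X] [NormedSpace ℝ X] [NormedAddCommGroup U]
  [NormedSpace ℝ U] {G : X → U → ℝ}

theorem continuous_fderiv_left (hG : ContDiff ℝ 1 fun q : X × U => G q.1 q.2) :
    Continuous fun q : X × U => fderiv ℝ (fun x => G x q.2) q.1 := by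
  have h : ∀ q : X × U, fderiv ℝ (fun x => G x q.2) q.1 =
      (fderiv ℝ (fun q : X × U => G q.1 q.2) q).comp (ContinuousLinearMap.inl ℝ X U) :=
    fun q => HasFDerivAt.fderiv <| HasFDerivAt.comp (g := fun q : X × U => G q.1 q.2)
      (f := fun x => (x, q.2)) q.1
      (hG.differentiable one_ne_zero q).hasFDerivAt (hasFDerivAt_prodMk_left q.1 q.2)
  simp_rw [h]
  exact (hG.continuous_fderiv one_ne_zero).clm_comp continuous_const

theorem continuous_fderiv_right (hG : ContDiff ℝ 1 fun q : X × U => G q.1 q.2) :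
    Continuous fun q : X × U => fderiv ℝ (fun u => G q.1 u) q.2 := by
  have h : ∀ q : X × U, fderiv ℝ (fun u => G q.1 u) q.2 =
      (fderiv ℝ (fun q : X × U => G q.1 q.2) q).comp (ContinuousLinearMap.inr ℝ X U) :=
    fun q => HasFDerivAt.fderiv <| HasFDerivAt.comp (g := fun q : X × U => G q.1 q.2)
      (f := fun u => (q.1, u)) q.2
      (hG.differentiable one_ne_zero q).hasFDerivAt (hasFDerivAt_prodMk_right q.1 q.2)
  simp_rw [h]
  exact (hG.continuous_fderiv one_ne_zero).clm_comp continuous_const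

end partialDerivatives

theorem Continuous.integrable_of_ae_mem_isCompact {Y V : Type*} [TopologicalSpace Y]
    [TopologicalSpace.PseudoMetrizableSpace Y] [T2Space Y] [MeasurableSpace Y] [BorelSpace Y]
    [NormedAddCommGroup V] {ν : Measure Y} [IsFiniteMeasure ν] {g : Y → V} (hg : Continuous g)
    {K : Set Y} (hK : IsCompact K) (hνK : ∀ᵐ y ∂ν, y ∈ K) : Integrable g ν := by
  have h := hg.continuousOn.integrableOn_compact (μ := ν) hK
  rwa [IntegrableOn, Measure.restrict_eq_self_of_ae_mem hνK] at h

/-- A measure on a product concentrated on a compact set `Z` averages a continuous function along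
the fibres into a density with values in the convex hulls of the images of the sections of `Z`. -/
theorem exists_density_mem_convexHull {W V : Type*} [NormedAddCommGroup W]
    [NormedSpace ℝ W] [FiniteDimensional ℝ W] [MeasurableSpace W] [BorelSpace W]
    [NormedAddCommGroup V] [NormedSpace ℝ V] [FiniteDimensional ℝ V]
    (ν : Measure (ℝ × W)) [IsFiniteMeasure ν] {Z : Set (ℝ × W)} (hZ : IsCompact Z)
    (hνZ : ∀ᵐ y ∂ν, y ∈ Z) {g : ℝ × W → V} (hg : Continuous g) :
    ∃ s : ℝ → V, AEStronglyMeasurable s ν.fst ∧ (∃ C : ℝ, ∀ᵐ t ∂ν.fst, ‖s t‖ ≤ C) ∧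
      (∀ φ : ℝ → ℝ, Continuous φ →
        ∫ t, φ t • s t ∂ν.fst = ∫ y, φ y.1 • g y ∂ν) ∧
      ∀ᵐ t ∂ν.fst, (Prod.mk t ⁻¹' Z).Nonempty ∧
        s t ∈ convexHull ℝ ((fun v => g (t, v)) '' (Prod.mk t ⁻¹' Z)) := by
  have hfib : ∀ᵐ t ∂ν.fst, ∀ᵐ v ∂ν.condKernel t, (t, v) ∈ Z := by
    rw [← ν.disintegrate ν.condKernel] at hνZ
    exact Measure.ae_ae_of_ae_compProd hνZ
  obtain ⟨M, hM⟩ := hZ.exists_bound_of_continuousOn hg.continuousOn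
  refine ⟨fun t => ∫ v, g (t, v) ∂ν.condKernel t,
    hg.aestronglyMeasurable.integral_condKernel, ⟨M, ?_⟩, fun φ hφ => ?_, ?_⟩
  · filter_upwards [hfib] with t ht
    simpa using norm_integral_le_of_norm_le_const (ht.mono fun v hv => hM _ hv)
  · have hφg : Integrable (fun y => φ y.1 • g y) ν :=
      Continuous.integrable_of_ae_mem_isCompact (by fun_prop) hZ hνZ
    have hsmul : ∀ t, φ t • ∫ v, g (t, v) ∂ν.condKernel t =
        ∫ v, φ t • g (t, v) ∂ν.condKernel t := fun t => (integral_smul _ _).symm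
    simp_rw [hsmul]
    exact Measure.integral_condKernel hφg
  · filter_upwards [hfib] with t ht
    have hcont : Continuous fun v => g (t, v) := by fun_prop
    have hZt : IsCompact (Prod.mk t ⁻¹' Z) :=
      (hZ.image continuous_snd).of_isClosed_subset
        (hZ.isClosed.preimage (by fun_prop)) fun v hv => ⟨(t, v), hv, rfl⟩
    refine ⟨ht.exists, (convex_convexHull ℝ _).integral_mem
      (hZt.image hcont).convexHull_of_finiteDimensional.isClosed ?_ ?_⟩
    · filter_upwards [ht] with v hv
      exact subset_convexHull ℝ _ ⟨v, hv, rfl⟩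
    · exact .of_bound hcont.aestronglyMeasurable M (ht.mono fun v hv => hM _ hv)

/-- representation of the singular part: under the stated hypotheses, the
weak-* limit `μ̂_B` of the vector measures `λ^k G_x(ŵ) dt` has a density `ŝ` with respect
to the weak-* limit `η̂` of `λ^k dt`, with `ŝ(t) ∈ conv S(x̂(t), clm(û)(t))` for `η̂`-a.e.
`t`; in particular `η̂`-a.e. `t` belongs to `D`.  (Weak-* convergence and the identity
`μ̂_B = ŝ·η̂` are expressed by testing against all continuous functions.) -/
theorem singular_part_representation {n m : ℕ} (t0 t1 : ℝ) (ht : t0 < t1)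
    (xh : ℝ → (Fin n → ℝ)) (uh : ℝ → (Fin m → ℝ))
    (hxh : ContinuousOn xh (Icc t0 t1))
    (huh_meas : Measurable uh) (huh_bdd : EssBdd t0 t1 uh)
    (G : (Fin n → ℝ) → (Fin m → ℝ) → ℝ)
    (hG : ContDiff ℝ 1 (fun q : (Fin n → ℝ) × (Fin m → ℝ) => G q.1 q.2))
    (E : ℕ → Set ℝ) (hE : ∀ k, MeasurableSet (E k) ∧ E k ⊆ Icc t0 t1)
    (hEmes : Tendsto (fun k => (volume (E k)).toReal) atTop (nhds 0))
    (lam : ℕ → ℝ → ℝ)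
    (hlam_int : ∀ k, IntegrableOn (lam k) (Icc t0 t1))
    (hlam_nonneg : ∀ k, ∀ᵐ t ∂(volume.restrict (Icc t0 t1)), 0 ≤ lam k t)
    (hlam_supp : ∀ k, ∀ᵐ t ∂(volume.restrict (Icc t0 t1)), t ∉ E k → lam k t = 0)
    (δ ε : ℕ → ℝ) (hδpos : ∀ k, 0 < δ k) (hεpos : ∀ k, 0 < ε k)
    (hδ0 : Tendsto δ atTop (nhds 0)) (hε0 : Tendsto ε atTop (nhds 0))
    (hGbound : ∀ k, ∀ᵐ t ∂(volume.restrict (E k)),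
      -δ k ≤ G (xh t) (uh t) ∧ G (xh t) (uh t) ≤ 0 ∧
      ‖fderiv ℝ (fun u' => G (xh t) u') (uh t)‖ ≤ ε k)
    (η : Measure ℝ) (hηfin : IsFiniteMeasure η) (hηne : η ≠ 0)
    (hηsupp : η ((Icc t0 t1)ᶜ) = 0)
    -- `λ^k dt` converges weakly-* to `η̂`
    (hηconv : ∀ φ : ℝ → ℝ, Continuous φ →
      Tendsto (fun k => ∫ t in Icc t0 t1, lam k t * φ t) atTop (nhds (∫ t, φ t ∂η)))
    -- `λ^k G_x(ŵ) dt` converges weakly-* (to the vector measure `μ̂_B`)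
    (hμconv : ∀ φ : ℝ → ℝ, Continuous φ →
      ∃ L : (Fin n → ℝ) →L[ℝ] ℝ,
        Tendsto (fun k => ∫ t in Icc t0 t1,
            (lam k t * φ t) • fderiv ℝ (fun x' => G x' (uh t)) (xh t)) atTop (nhds L)) :
    ∃ s : ℝ → (Fin n → ℝ) →L[ℝ] ℝ,
      AEStronglyMeasurable s η ∧
      (∃ C : ℝ, ∀ᵐ t ∂η, ‖s t‖ ≤ C) ∧
      -- `μ̂_B = ŝ·η̂`
      (∀ φ : ℝ → ℝ, Continuous φ →
        Tendsto (fun k => ∫ t in Icc t0 t1,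
            (lam k t * φ t) • fderiv ℝ (fun x' => G x' (uh t)) (xh t)) atTop
          (nhds (∫ t, φ t • s t ∂η))) ∧
      -- `ŝ(t) ∈ conv S(x̂(t), clm(û)(t))` for `η̂`-a.e. `t`, and `η̂`-a.e. `t` lies in `D`
      (∀ᵐ t ∂η, s t ∈ convexHull ℝ (Sset G (xh t) (clmAt t0 t1 uh t))
        ∧ t ∈ Dset t0 t1 G xh uh) := by
  obtain ⟨C, hC⟩ := huh_bdd
  let x : ℝ → Fin n → ℝ := IccExtend ht.le ((Icc t0 t1).domRestrict xh)
  have hx : Continuous x := hxh.domRestrict.Icc_extend'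
  have hxx : ∀ t ∈ Icc t0 t1, x t = xh t := fun t h => IccExtend_of_mem _ _ h
  let g : ℝ × (Fin m → ℝ) → ((Fin n → ℝ) →L[ℝ] ℝ) :=
    fun y => fderiv ℝ (fun x' => G x' y.2) (x y.1)
  have hg : Continuous g := (continuous_fderiv_left hG).comp
    ((hx.comp continuous_fst).prodMk continuous_snd)
  let H : ℝ × (Fin m → ℝ) → ℝ :=
    fun y => |G (x y.1) y.2| + ‖fderiv ℝ (fun u' => G (x y.1) u') y.2‖
  have hH : Continuous H :=
    ((hG.continuous.comp ((hx.comp continuous_fst).prodMk continuous_snd)).abs).add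
      ((continuous_fderiv_right hG).comp
        ((hx.comp continuous_fst).prodMk continuous_snd)).norm
  have hH0 : ∀ y, 0 ≤ H y := fun y => by positivity
  let K : Set (ℝ × (Fin m → ℝ)) :=
    clmSet t0 t1 uh ∩ (Icc t0 t1 ×ˢ Metric.closedBall 0 C)
  have hK : IsCompact K := (isCompact_Icc.prod (isCompact_closedBall _ _)).inter_left
    (isClosed_clmSet t0 t1 huh_meas)
  let ν : ℕ → Measure (ℝ × (Fin m → ℝ)) := fun k => graphMeasure t0 t1 uh (lam k)
  have hνint : ∀ k, ∀ f : ℝ × (Fin m → ℝ) → ℝ, Continuous f →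
      ∫ y, f y ∂ν k = ∫ t in Icc t0 t1, lam k t * f (t, uh t) := fun k f hf =>
    integral_graphMeasure huh_meas (hlam_int k) (hlam_nonneg k) hf
  have hνfin : ∀ k, IsFiniteMeasure (ν k) := fun k => isFiniteMeasure_graphMeasure (hlam_int k)
  have hνK : ∀ k, ∀ᵐ y ∂ν k, y ∈ K := fun k => by
    refine ae_graphMeasure huh_meas hK.measurableSet ?_
    filter_upwards [ae_mem_clmSet t0 t1 huh_meas, hC, ae_restrict_mem measurableSet_Icc]
      with t h1 h2 h3
    exact ⟨h1, h3, by simpa using h2⟩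
  have hmass : ∀ k, (ν k).real univ = ∫ t in Icc t0 t1, lam k t := fun k => by
    simpa using hνint k (fun _ => 1) continuous_const
  have hmasslim : Tendsto (fun k => (ν k).real univ) atTop (nhds (η.real univ)) := by
    simpa [hmass] using hηconv (fun _ => 1) continuous_const
  obtain ⟨B, hB⟩ := hmasslim.bddAbove_range
  obtain ⟨ν', f, hν'fin, hf, hfle, hν'K, hlim⟩ := exists_tendsto_integral_of_isCompact hK ν
    (fun k => hB (mem_range_self k)) fun k => hνK k
  have hfst : ν'.fst = η := by
    refine ext_of_forall_integral_eq_of_IsFiniteMeasure fun φ => ?_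
    rw [Measure.fst, integral_map measurable_fst.aemeasurable
      φ.continuous.aestronglyMeasurable]
    have hcont : Continuous fun y : ℝ × (Fin m → ℝ) => φ y.1 := by fun_prop
    refine tendsto_nhds_unique (hlim _ hcont) ?_
    simp_rw [hνint _ _ hcont]
    exact (hηconv φ φ.continuous).mono_left hfle
  have hHk : ∀ k, ∫ y, H y ∂ν k ≤ (δ k + ε k) * (ν k).real univ := fun k => by
    have hae : ∀ᵐ t ∂(volume.restrict (Icc t0 t1)),
        lam k t * H (t, uh t) ≤ (δ k + ε k) * lam k t := by
      filter_upwards [hlam_nonneg k, hlam_supp k, ae_restrict_mem measurableSet_Icc,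
        ae_restrict_of_ae ((ae_restrict_iff' (hE k).1).1 (hGbound k))] with t h0 hsupp htI hbd
      by_cases htE : t ∈ E k
      · obtain ⟨h1, h2, h3⟩ := hbd htE
        rw [mul_comm (δ k + ε k)]
        refine mul_le_mul_of_nonneg_left (add_le_add ?_ ?_) h0
        · simp only [hxx t htI]
          exact abs_le.2 ⟨h1, h2.trans (hδpos k).le⟩
        · simpa only [hxx t htI] using h3
      · simp [hsupp htE]
    rw [hνint k H hH, hmass, ← integral_const_mul]
    refine integral_mono_of_nonneg ?_ ((hlam_int k).const_mul _) hae
    filter_upwards [hlam_nonneg k] with t h0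
    exact mul_nonneg h0 (hH0 _)
  have hHint : ∫ y, H y ∂ν' = 0 := by
    refine tendsto_nhds_unique (hlim H hH) (Tendsto.mono_left ?_ hfle)
    refine squeeze_zero (fun k => integral_nonneg hH0) hHk ?_
    simpa using (hδ0.add hε0).mul hmasslim
  have hν'K' : ∀ᵐ y ∂ν', y ∈ K := hν'K
  have hHint' : Integrable H ν' := hH.integrable_of_ae_mem_isCompact hK hν'K'
  have hν'Z : ∀ᵐ y ∂ν', y ∈ K ∩ {y | H y = 0} := by
    filter_upwards [hν'K', (integral_eq_zero_iff_of_nonneg hH0 hHint').1 hHint] with y h1 h2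
    exact ⟨h1, h2⟩
  obtain ⟨s, hs_meas, hs_bdd, hs_int, hs_mem⟩ := exists_density_mem_convexHull ν'
    (hK.inter_right (isClosed_eq hH continuous_const)) hν'Z hg
  rw [hfst] at hs_meas hs_bdd hs_int hs_mem
  have hZ : ∀ t v, (t, v) ∈ K ∩ {y | H y = 0} → t ∈ Icc t0 t1 ∧ v ∈ clmAt t0 t1 uh t ∧
      G (xh t) v = 0 ∧ fderiv ℝ (fun u' => G (xh t) u') v = 0 := by
    rintro t v ⟨⟨h1, h2, -⟩, h3⟩
    obtain ⟨h4, h5⟩ := (add_eq_zero_iff_of_nonneg (abs_nonneg _) (norm_nonneg _)).1 h3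
    simp only [hxx t h2] at h4 h5
    exact ⟨h2, h1, abs_eq_zero.1 h4, norm_eq_zero.1 h5⟩
  refine ⟨s, hs_meas, hs_bdd, fun φ hφ => ?_, ?_⟩
  · obtain ⟨L, hL⟩ := hμconv φ hφ
    suffices L = ∫ t, φ t • s t ∂η from this ▸ hL
    rw [hs_int φ hφ]
    have hφg : Continuous fun y : ℝ × (Fin m → ℝ) => φ y.1 • g y := by fun_prop
    have hνφ : ∀ k, ∫ y, φ y.1 • g y ∂ν k = ∫ t in Icc t0 t1,
        (lam k t * φ t) • fderiv ℝ (fun x' => G x' (uh t)) (xh t) := fun k => by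
      rw [integral_graphMeasure huh_meas (hlam_int k) (hlam_nonneg k) hφg]
      refine setIntegral_congr_fun measurableSet_Icc fun t htI => ?_
      simp only [g, hxx t htI, smul_smul]
    simp_rw [← hνφ] at hL
    ext1 e
    rw [ContinuousLinearMap.integral_apply (hφg.integrable_of_ae_mem_isCompact hK hν'K')]
    have hcont : Continuous fun y : ℝ × (Fin m → ℝ) => (φ y.1 • g y) e := by fun_prop
    refine tendsto_nhds_unique (((ContinuousLinearMap.apply ℝ ℝ e).continuous.tendsto L).comp
      (hL.mono_left hfle)) ((hlim _ hcont).congr fun k => ?_)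
    exact (ContinuousLinearMap.integral_apply
      (hφg.integrable_of_ae_mem_isCompact hK (hνK k)) e).symm
  · filter_upwards [hs_mem] with t htmem
    obtain ⟨⟨v, hv⟩, hst⟩ := htmem
    obtain ⟨htI, hvclm, hvG, hvGu⟩ := hZ t v hv
    refine ⟨convexHull_mono ?_ hst, htI, v, hvclm, hvG, hvGu⟩
    rintro _ ⟨w, hw, rfl⟩
    obtain ⟨-, hwclm, hwG, hwGu⟩ := hZ t w hw
    exact ⟨w, hwclm, hwG, hwGu, by simp only [g, hxx t htI]⟩
end

section
/- Let g ∈ L^∞([t0,t1],R) with g(t) ≤ 0 a.e., let δ^k → 0+ be positive numbers, and let λ^k ∈ L^1([t0,t1],R) satisfy λ^k ≥ 0 a.e. and λ^k(t) = 0 for a.e. t with g(t) < −δ^k. If λ^k converges weakly in L^1 to λ̂ (i.e., ∫ λ^k u dt → ∫ λ̂ u dt for all u ∈ L^∞), then λ̂(t) ≥ 0 a.e. and λ̂(t)·g(t) = 0 for a.e. t ∈ [t0,t1]. -/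
open MeasureTheory Set Filter

section WeakLimits

variable {α : Type*} [MeasurableSpace α] {μ : Measure α} {f : ℕ → α → ℝ} {F : α → ℝ}

/-- Convergence against bounded measurable functions implies convergence of set integrals. -/
lemma tendsto_setIntegral_of_tendsto_integral_mul
    (hconv : ∀ u : α → ℝ, Measurable u → (∃ C : ℝ, ∀ t, |u t| ≤ C) →
      Tendsto (fun k => ∫ t, f k t * u t ∂μ) atTop (nhds (∫ t, F t * u t ∂μ)))
    {s : Set α} (hs : MeasurableSet s) :
    Tendsto (fun k => ∫ t in s, f k t ∂μ) atTop (nhds (∫ t in s, F t ∂μ)) := by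
  have integral_mul_indicator (φ : α → ℝ) :
      ∫ t, φ t * s.indicator (fun _ => (1 : ℝ)) t ∂μ = ∫ t in s, φ t ∂μ := by
    rw [← integral_indicator hs]
    refine integral_congr_ae (Eventually.of_forall fun t => ?_)
    by_cases ht : t ∈ s <;> simp [ht]
  have hu := hconv (s.indicator fun _ => 1) (measurable_const.indicator hs)
    ⟨1, fun t => by by_cases ht : t ∈ s <;> simp [ht]⟩
  simpa only [integral_mul_indicator] using hu

lemma ae_nonneg_of_tendsto_setIntegral (hF : Integrable F μ)
    (hf : ∀ k, ∀ᵐ t ∂μ, 0 ≤ f k t)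
    (hconv : ∀ s, MeasurableSet s →
      Tendsto (fun k => ∫ t in s, f k t ∂μ) atTop (nhds (∫ t in s, F t ∂μ))) :
    ∀ᵐ t ∂μ, 0 ≤ F t :=
  ae_nonneg_of_forall_setIntegral_nonneg hF fun s hs _ =>
    ge_of_tendsto' (hconv s hs) fun k =>
      integral_nonneg_of_ae (ae_restrict_of_ae (hf k))

/-- If the `f k` eventually vanish on `s`, then so does a nonnegative limit of their
integrals over `s`. -/
lemma ae_eq_zero_of_tendsto_setIntegral (hF : Integrable F μ) (hF0 : ∀ᵐ t ∂μ, 0 ≤ F t)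
    {s : Set α} (hs : MeasurableSet s)
    (hf : ∀ᶠ k in atTop, ∀ᵐ t ∂μ, t ∈ s → f k t = 0)
    (hconv : Tendsto (fun k => ∫ t in s, f k t ∂μ) atTop (nhds (∫ t in s, F t ∂μ))) :
    ∀ᵐ t ∂μ, t ∈ s → F t = 0 := by
  have hzero : ∫ t in s, F t ∂μ = 0 := by
    refine tendsto_nhds_unique hconv (tendsto_const_nhds.congr' ?_)
    filter_upwards [hf] with k hk
    exact (integral_eq_zero_of_ae ((ae_restrict_iff' hs).2 hk)).symm
  exact (ae_restrict_iff' hs).1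
    ((integral_eq_zero_iff_of_nonneg_ae (ae_restrict_of_ae hF0) hF.integrableOn).1 hzero)

end WeakLimits

/-- let `g ∈ L^∞([t0,t1],ℝ)` with `g ≤ 0` a.e., `δ^k → 0+`, and let
`λ^k ∈ L¹` with `λ^k ≥ 0` a.e. and `λ^k(t) = 0` for a.e. `t` with `g(t) < -δ^k`.
If `λ^k → λ̂` weakly in `L¹` (tested against every `u ∈ L^∞`), then `λ̂ ≥ 0` a.e.
and `λ̂·g = 0` a.e. on `[t0,t1]`. -/
theorem complementary_slackness_limit (t0 t1 : ℝ) (g : ℝ → ℝ)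
    (hg_meas : Measurable g)
    (hg_bdd : ∃ C : ℝ, ∀ᵐ t ∂(volume.restrict (Icc t0 t1)), |g t| ≤ C)
    (hg_nonpos : ∀ᵐ t ∂(volume.restrict (Icc t0 t1)), g t ≤ 0)
    (δ : ℕ → ℝ) (hδpos : ∀ k, 0 < δ k) (hδ0 : Tendsto δ atTop (nhds 0))
    (lam : ℕ → ℝ → ℝ)
    (hlam_int : ∀ k, IntegrableOn (lam k) (Icc t0 t1))
    (hlam_nonneg : ∀ k, ∀ᵐ t ∂(volume.restrict (Icc t0 t1)), 0 ≤ lam k t)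
    (hlam_supp : ∀ k, ∀ᵐ t ∂(volume.restrict (Icc t0 t1)), g t < -δ k → lam k t = 0)
    (lamh : ℝ → ℝ) (hlamh_int : IntegrableOn lamh (Icc t0 t1))
    (hconv : ∀ u : ℝ → ℝ, Measurable u → (∃ C : ℝ, ∀ t, |u t| ≤ C) →
      Tendsto (fun k => ∫ t in Icc t0 t1, lam k t * u t) atTop
        (nhds (∫ t in Icc t0 t1, lamh t * u t))) :
    (∀ᵐ t ∂(volume.restrict (Icc t0 t1)), 0 ≤ lamh t) ∧
    (∀ᵐ t ∂(volume.restrict (Icc t0 t1)), lamh t * g t = 0) := by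
  have hset : ∀ s, MeasurableSet s → Tendsto (fun k => ∫ t in s, lam k t
      ∂(volume.restrict (Icc t0 t1))) atTop (nhds (∫ t in s, lamh t
      ∂(volume.restrict (Icc t0 t1)))) :=
    fun s hs => tendsto_setIntegral_of_tendsto_integral_mul hconv hs
  have hnonneg := ae_nonneg_of_tendsto_setIntegral hlamh_int hlam_nonneg hset
  refine ⟨hnonneg, ?_⟩
  have hzero : ∀ n : ℕ, ∀ᵐ t ∂(volume.restrict (Icc t0 t1)),
      t ∈ {t | g t < -(1 / ((n : ℝ) + 1))} → lamh t = 0 := by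
    intro n
    have hs : MeasurableSet {t | g t < -(1 / ((n : ℝ) + 1))} :=
      measurableSet_lt hg_meas measurable_const
    refine ae_eq_zero_of_tendsto_setIntegral hlamh_int hnonneg hs ?_ (hset _ hs)
    filter_upwards [hδ0.eventually_lt_const (Nat.one_div_pos_of_nat (n := n))] with k hk
    filter_upwards [hlam_supp k] with t ht hgt
    exact ht (lt_trans hgt (neg_lt_neg hk))
  filter_upwards [hg_nonpos, ae_all_iff.2 hzero] with t hgt hzt
  rcases hgt.eq_or_lt with h | h
  · rw [h, mul_zero]
  · obtain ⟨n, hn⟩ := exists_nat_one_div_lt (neg_pos.2 h)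
    rw [hzt n (lt_neg_of_lt_neg hn), zero_mul]
end

section
/- Let 0 < m < T and b = T − m. Define x̂ ∈ AC([−T,T],R) by x̂(t) = 0 for |t| ≤ b and x̂(t) = (1/2)(|t| − b)² for b ≤ |t| ≤ T, and û(t) = x̂'(t) (so û = 0 on [−b,b], û(t) = t − b on [b,T], û(t) = t + b on [−T,−b]). Then (x̂,û) is a global minimizer of the problem: minimize J(x,u) = ∫_{−T}^{T} x(t)dt − (m/2)(x(−T) + x(T)) over x ∈ AC([−T,T],R), u ∈ L^∞([−T,T],R) subject to ẋ(t) = u(t) a.e. and (1/2)u(t)² − x(t) ≤ 0 a.e.; that is, every admissible pair (x,u) satisfies J(x,u) ≥ J(x̂,û) = −m³/6. -/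
open MeasureTheory Set Filter

/-- Admissible pairs of Example 2 on `[-T,T]`: `x` absolutely continuous with `ẋ = u`
a.e. (encoded in integral form), `u ∈ L^∞`, and the nonregular mixed constraint
`(1/2)u² - x ≤ 0` a.e. -/
def AdmissibleEx2 (T : ℝ) (x u : ℝ → ℝ) : Prop :=
  Measurable u ∧ (∃ C : ℝ, ∀ᵐ t ∂(volume.restrict (Icc (-T) T)), |u t| ≤ C) ∧
  IntegrableOn u (Icc (-T) T) ∧
  (∀ t ∈ Icc (-T) T, x t = x (-T) + ∫ s in (-T)..t, u s) ∧
  (∀ᵐ t ∂(volume.restrict (Icc (-T) T)), (1/2) * (u t)^2 - x t ≤ 0)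

/-- The cost of Example 2 (Mayer problem in reduced form):
`J(x,u) = ∫_{-T}^{T} x dt - (m/2)(x(-T) + x(T))`. -/
noncomputable def costEx2 (T m : ℝ) (x : ℝ → ℝ) : ℝ :=
  (∫ t in Icc (-T) T, x t) - (m / 2) * (x (-T) + x T)

open intervalIntegral

/-- The powers of the positive part are differentiable from the square on. -/
lemma hasDerivAt_max_zero_pow (n : ℕ) (s : ℝ) :
    HasDerivAt (fun s : ℝ => max s 0 ^ (n + 2)) ((n + 2) * max s 0 ^ (n + 1)) s := by
  refine hasDerivAt_of_hasDerivAt_of_ne' (x := 0)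
    (g := fun s : ℝ => (n + 2) * max s 0 ^ (n + 1)) (fun y hy => ?_) ?_ ?_ s
  · rcases lt_or_gt_of_ne hy with h | h
    · simp only [max_eq_right h.le]
      have h0 : (fun s : ℝ => max s 0 ^ (n + 2)) =ᶠ[nhds y] fun _ => 0 := by
        filter_upwards [Iio_mem_nhds h] with z hz
        simp [max_eq_right (mem_Iio.1 hz).le]
      simpa using (hasDerivAt_const y (0 : ℝ)).congr_of_eventuallyEq h0
    · simp only [max_eq_left h.le]
      have h0 : (fun s : ℝ => max s 0 ^ (n + 2)) =ᶠ[nhds y] fun z => z ^ (n + 2) := by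
        filter_upwards [Ioi_mem_nhds h] with z hz
        simp [max_eq_left (mem_Ioi.1 hz).le]
      simpa using (hasDerivAt_pow (n + 2) y).congr_of_eventuallyEq h0
  · fun_prop
  · fun_prop

lemma hasDerivAt_max_sub_zero_pow (n : ℕ) (b t : ℝ) :
    HasDerivAt (fun t : ℝ => max (t - b) 0 ^ (n + 2)) ((n + 2) * max (t - b) 0 ^ (n + 1)) t := by
  simpa [Function.comp_def] using (hasDerivAt_max_zero_pow n (t - b)).comp t ((hasDerivAt_id t).sub_const b)

lemma hasDerivAt_max_neg_sub_zero_pow (n : ℕ) (b t : ℝ) :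
    HasDerivAt (fun t : ℝ => max (-t - b) 0 ^ (n + 2))
      (-((n + 2) * max (-t - b) 0 ^ (n + 1))) t := by
  simpa [Function.comp_def] using (hasDerivAt_max_zero_pow n (-t - b)).comp t ((hasDerivAt_neg t).sub_const b)

lemma max_abs_sub_zero_pow {b : ℝ} (hb : 0 ≤ b) {n : ℕ} (hn : n ≠ 0) (t : ℝ) :
    max (|t| - b) 0 ^ n = max (t - b) 0 ^ n + max (-t - b) 0 ^ n := by
  rcases le_total 0 t with h | h
  · rw [abs_of_nonneg h, max_eq_right (by linarith : -t - b ≤ 0), zero_pow hn, add_zero]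
  · rw [abs_of_nonpos h, max_eq_right (by linarith : t - b ≤ 0), zero_pow hn, zero_add]

lemma ite_max_min_eq {b : ℝ} (hb : 0 ≤ b) (t : ℝ) :
    (if 0 ≤ t then max (t - b) 0 else min (t + b) 0) = max (t - b) 0 - max (-t - b) 0 := by
  grind

/-- Product rule in integral form for an indefinite integral against an affine weight. -/
lemma integral_add_sub_mul_eq {a d c : ℝ} (had : a ≤ d) {x u : ℝ → ℝ}
    (hu : IntervalIntegrable u volume a d)
    (hx : ∀ t ∈ Icc a d, x t = x a + ∫ s in a..t, u s) :
    ∫ t in a..d, (x t + (t - c) * u t) = (d - c) * x d - (a - c) * x a := by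
  have hw : AbsolutelyContinuousOnInterval (fun t : ℝ => t - c) a d :=
    ContDiffOn.absolutelyContinuousOnInterval (by fun_prop)
  have hX : AbsolutelyContinuousOnInterval (fun t => x a + ∫ s in a..t, u s) a d :=
    AbsolutelyContinuousOnInterval.add
      (ContDiffOn.absolutelyContinuousOnInterval contDiffOn_const)
      (hu.absolutelyContinuousOnInterval_intervalIntegral left_mem_uIcc)
  have h := hw.integral_deriv_mul_eq_sub hX
  simp only [← hx d (right_mem_Icc.2 had), integral_same, add_zero] at h
  rw [← h]
  refine integral_congr_ae ?_
  filter_upwards [hu.ae_hasDerivAt_integral] with t ht htm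
  have htm' := uIoc_subset_uIcc htm
  have hd : deriv (fun t => x a + ∫ s in a..t, u s) t = u t :=
    ((ht htm' a left_mem_uIcc).const_add (x a)).deriv
  rw [hd, hx t (by rwa [uIcc_of_le had] at htm')]
  simp

lemma intervalIntegrable_of_eq_add_integral {a d : ℝ} (had : a ≤ d) {x u : ℝ → ℝ}
    (hu : IntervalIntegrable u volume a d)
    (hx : ∀ t ∈ Icc a d, x t = x a + ∫ s in a..t, u s) :
    IntervalIntegrable x volume a d := by
  refine ContinuousOn.intervalIntegrable ?_
  refine ContinuousOn.congr (f := fun t => x a + ∫ s in a..t, u s) ?_ (by rwa [uIcc_of_le had])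
  exact continuousOn_const.add
    (hu.absolutelyContinuousOnInterval_intervalIntegral left_mem_uIcc).continuousOn

/-- The Young inequality `x ≥ u² / 2 ≥ w u - w² / 2` with the affine weight `w t = t - c`,
integrated over an interval. -/
lemma le_integral_of_half_sq_le {a d c : ℝ} (had : a ≤ d) {x u : ℝ → ℝ}
    (hu : IntervalIntegrable u volume a d)
    (hx : ∀ t ∈ Icc a d, x t = x a + ∫ s in a..t, u s)
    (hux : ∀ᵐ t ∂(volume.restrict (Icc a d)), (1 / 2) * u t ^ 2 - x t ≤ 0) :
    ((d - c) * x d - (a - c) * x a) / 2 - ((d - c) ^ 3 - (a - c) ^ 3) / 12 ≤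
      ∫ t in a..d, x t := by
  have hxi := intervalIntegrable_of_eq_add_integral had hu hx
  have hwi : IntervalIntegrable (fun t => x t + (t - c) * u t) volume a d :=
    hxi.add (hu.continuousOn_mul (by fun_prop))
  have hqi : IntervalIntegrable (fun t : ℝ => (t - c) ^ 2) volume a d :=
    Continuous.intervalIntegrable (by fun_prop) _ _
  have hq : ∫ t in a..d, (t - c) ^ 2 = ((d - c) ^ 3 - (a - c) ^ 3) / 3 := by
    rw [integral_comp_sub_right (fun t => t ^ 2), integral_pow]
    norm_num
  calc _ = ∫ t in a..d, ((1 / 2) * (x t + (t - c) * u t) - (1 / 4) * (t - c) ^ 2) := by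
        rw [integral_sub (hwi.const_mul _) (hqi.const_mul _),
          intervalIntegral.integral_const_mul, intervalIntegral.integral_const_mul, hq, integral_add_sub_mul_eq had hu hx]
        ring
    _ ≤ _ := by
        refine integral_mono_ae_restrict had ((hwi.const_mul _).sub (hqi.const_mul _)) hxi ?_
        filter_upwards [hux] with t ht
        nlinarith [sq_nonneg (u t - (t - c))]

lemma neg_cube_div_six_le_costEx2 {T m : ℝ} (hm0 : 0 < m) (hmT : m < T) {x u : ℝ → ℝ}
    (h : AdmissibleEx2 T x u) : -(m ^ 3) / 6 ≤ costEx2 T m x := by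
  obtain ⟨-, -, hui, hx, hux⟩ := h
  have hT : -T ≤ T := by linarith
  have hu : ∀ {a d : ℝ}, -T ≤ a → a ≤ d → d ≤ T → IntervalIntegrable u volume a d :=
    fun ha had hd => (hui.mono_set (by rw [uIcc_of_le had]; exact Icc_subset_Icc ha hd)
      ).intervalIntegrable
  have hxi := intervalIntegrable_of_eq_add_integral hT (hu le_rfl hT le_rfl) hx
  have hxi' : ∀ {a d : ℝ}, -T ≤ a → a ≤ d → d ≤ T → IntervalIntegrable x volume a d :=
    fun ha had hd => hxi.mono_set
      (by rw [uIcc_of_le had, uIcc_of_le hT]; exact Icc_subset_Icc ha hd)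
  have hleft := le_integral_of_half_sq_le (a := -T) (d := -(T - m)) (c := -(T - m))
    (by linarith) (hu le_rfl (by linarith) (by linarith))
    (fun t ht => hx t ⟨ht.1, by linarith [ht.2]⟩)
    (ae_restrict_of_ae_restrict_of_subset (Icc_subset_Icc le_rfl (by linarith)) hux)
  have hright := le_integral_of_half_sq_le (a := T - m) (d := T) (c := T - m)
    (by linarith) (hu (by linarith) (by linarith) le_rfl)
    (fun t ht => by
      rw [hx t ⟨by linarith [ht.1], ht.2⟩, hx (T - m) ⟨by linarith, by linarith⟩, add_assoc,
        integral_add_adjacent_intervals (hu le_rfl (by linarith) (by linarith))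
          (hu (by linarith) ht.1 ht.2)])
    (ae_restrict_of_ae_restrict_of_subset (Icc_subset_Icc (by linarith) le_rfl) hux)
  have hmid : 0 ≤ ∫ t in (-(T - m))..(T - m), x t := by
    refine integral_nonneg_of_ae_restrict (by linarith) ?_
    filter_upwards [ae_restrict_of_ae_restrict_of_subset
      (Icc_subset_Icc (by linarith : -T ≤ -(T - m)) (by linarith : T - m ≤ T)) hux] with t ht
    simp only [Pi.zero_apply]
    nlinarith [sq_nonneg (u t)]
  have hsplit₁ := integral_add_adjacent_intervals
    (hxi' (a := -T) (d := -(T - m)) le_rfl (by linarith) (by linarith))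
    (hxi' (d := T - m) (by linarith) (by linarith) (by linarith))
  have hsplit₂ := integral_add_adjacent_intervals
    (hxi' (a := -T) (d := T - m) le_rfl (by linarith) (by linarith))
    (hxi' (d := T) (by linarith) (by linarith) le_rfl)
  rw [costEx2, integral_Icc_eq_integral_Ioc, ← integral_of_le hT, ← hsplit₂, ← hsplit₁]
  linear_combination hleft + hright + hmid

lemma admissibleEx2_optimal {T m : ℝ} (hmT : m < T) :
    AdmissibleEx2 T
      (fun t => (1/2) * (max (|t| - (T - m)) 0)^2)
      (fun t => if 0 ≤ t then max (t - (T - m)) 0 else min (t + (T - m)) 0) := by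
  have hb : 0 ≤ T - m := by linarith
  simp only [ite_max_min_eq hb, max_abs_sub_zero_pow hb two_ne_zero]
  have hc : Continuous fun t => max (t - (T - m)) 0 - max (-t - (T - m)) 0 := by fun_prop
  refine ⟨hc.measurable, ?_, hc.continuousOn.integrableOn_Icc, fun t _ => ?_, ae_of_all _ ?_⟩
  · obtain ⟨C, hC⟩ := isCompact_Icc.exists_bound_of_continuousOn (s := Icc (-T) T) hc.continuousOn
    exact ⟨C, (ae_restrict_iff' measurableSet_Icc).2 (ae_of_all _ hC)⟩
  · rw [integral_eq_sub_of_hasDerivAt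
      (f := fun t => (1/2) * (max (t - (T - m)) 0 ^ 2 + max (-t - (T - m)) 0 ^ 2))
      (fun s _ => ?_) (hc.intervalIntegrable _ _)]
    · ring
    · convert! ((hasDerivAt_max_sub_zero_pow 0 (T - m) s).add
        (hasDerivAt_max_neg_sub_zero_pow 0 (T - m) s)).const_mul (1 / 2) using 1
      norm_num
      ring
  · intro t
    nlinarith [mul_nonneg (le_max_right (t - (T - m)) 0) (le_max_right (-t - (T - m)) 0)]

lemma costEx2_optimal {T m : ℝ} (hm0 : 0 < m) (hmT : m < T) :
    costEx2 T m (fun t => (1/2) * (max (|t| - (T - m)) 0)^2) = -(m^3) / 6 := by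
  have hb : 0 ≤ T - m := by linarith
  have hT : -T ≤ T := by linarith
  simp only [costEx2, max_abs_sub_zero_pow hb two_ne_zero]
  rw [integral_Icc_eq_integral_Ioc, ← integral_of_le hT,
    integral_eq_sub_of_hasDerivAt
      (f := fun t => (1/6) * (max (t - (T - m)) 0 ^ 3 - max (-t - (T - m)) 0 ^ 3))
      (fun s _ => ?_) (Continuous.intervalIntegrable (by fun_prop) _ _)]
  · have h1 : max (T - (T - m)) 0 = m := by rw [max_eq_left] <;> linarith
    have h2 : max (-T - (T - m)) 0 = 0 := max_eq_right (by linarith)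
    simp only [neg_neg, h1, h2]
    ring
  · convert! ((hasDerivAt_max_sub_zero_pow 1 (T - m) s).sub
      (hasDerivAt_max_neg_sub_zero_pow 1 (T - m) s)).const_mul (1 / 6) using 1
    norm_num
    ring

/-- Example 2: for `0 < m < T`, `b = T - m`, the process
`x̂(t) = (1/2)(max(|t| - b, 0))²`, `û = x̂'` is a global minimizer of
`min ∫_{-T}^T x dt - (m/2)(x(-T)+x(T))` subject to `ẋ = u`, `(1/2)u² - x ≤ 0`;
every admissible pair has cost `≥ J(x̂,û) = -m³/6`. -/
theorem example2_global_min (T m : ℝ) (hm0 : 0 < m) (hmT : m < T) :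
    AdmissibleEx2 T
      (fun t => (1/2) * (max (|t| - (T - m)) 0)^2)
      (fun t => if 0 ≤ t then max (t - (T - m)) 0 else min (t + (T - m)) 0) ∧
    costEx2 T m (fun t => (1/2) * (max (|t| - (T - m)) 0)^2) = -(m^3) / 6 ∧
    (∀ x u : ℝ → ℝ, AdmissibleEx2 T x u → -(m^3) / 6 ≤ costEx2 T m x) := by
  exact ⟨admissibleEx2_optimal hmT, costEx2_optimal hm0 hmT,
    fun _ _ => neg_cube_div_six_le_costEx2 hm0 hmT⟩
end
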